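/- arXiv:2407.16120 — 2 statements merged into one kernel-verified Lean document; each statement's English description precedes it below -/
import Mathlib

section
/- There is an absolute constant c > 0 with the following property. Let n ≥ 1 be an integer and let M be a real number with 1 ≤ M ≤ (1/4)·exp(n/9), and set a := (log(4M)/n)^{1/2} (so that a ≤ 1/3). Then for every choice of real numbers a_0, a_1, …, a_n ∈ [1, M] there exist b_0, b_1, …, b_n ∈ {−1, 0, 1} such that the polynomial P(x) = Σ_{j=0}^{n} b_j a_j x^j has at least c·(n/log(4M))^{1/2} − 1 distinct sign changes in the open interval I_a := (1−2a, 1−a); that is, there exist points t_0 < t_1 < ⋯ < t_q in (1−2a, 1−a) with q ≥ c·(n/log(4M))^{1/2} − 1 and P(t_{i−1})·P(t_i) < 0 for each i = 1, …, q. -/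
/-!
Precompose `P` with a Möbius map `φ` carrying the unit disk onto the disk with diameter `(-1/3, 1)`,
the interval `(0, 1/3)` into `(1 - 2a, 1 - a)`, and some `-ρ` with `1 - ρ` of order `a` to `0`. Fix
about `4an` nodes in `(0, 1/3)`. By the pigeonhole principle, the `b_j` can be chosen such that the
moments `∑ P(φ x) x ^ k` over the nodes, for `k < q` with `q` about `1 / (100a)`, are at most
`exp (-32an)`.

If `P ∘ φ` changes sign fewer than `q` times along the nodes, let `R` be the polynomial with a
simple root at each sign change. Then `P(φ x) R(x)` has constant sign on the nodes, so the moment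
bounds force `∑ |P(φ x) R(x)|` to be small. On the other hand, write `P = X ^ k Q` with
`|Q(0)| ≥ 1`. The function `Q(φ u) (1 - φ u) ^ 2 R(u)` is bounded on the unit circle, so if it were
small at the nodes, subtracting its Lagrange interpolant and dividing by Blaschke factors would show
that it is small at `-ρ`, where its absolute value is at least `R(-ρ)`.
-/

open Complex Finset Metric Polynomial
open scoped ComplexConjugate Nat

namespace BlochPolya

/-! ### Blaschke factors and Lagrange interpolation -/

theorem exists_diffContOnCl_eq_canonicalFactor_mul {R : ℝ} (hR : 0 < R) {z : ℂ}
    (hz : z ∈ ball 0 R) {f : ℂ → ℂ} (hf : DiffContOnCl ℂ f (ball 0 R)) (hfz : f z = 0) :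
    ∃ g : ℂ → ℂ, DiffContOnCl ℂ g (ball 0 R) ∧ ∀ u ≠ z, g u = canonicalFactor R z u * f u := by
  have hdslope : DiffContOnCl ℂ (dslope f z) (ball 0 R) := by
    refine ⟨(differentiableOn_dslope (isOpen_ball.mem_nhds hz)).2 hf.differentiableOn, ?_⟩
    refine (continuousOn_dslope ?_).2 ⟨hf.continuousOn, hf.differentiableAt isOpen_ball hz⟩
    exact Filter.mem_of_superset (isOpen_ball.mem_nhds hz) subset_closure
  have hnum : Differentiable ℂ fun u : ℂ => (R ^ 2 - conj z * u) / (R : ℂ) := by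
    fun_prop
  refine ⟨_, hnum.diffContOnCl.smul hdslope, fun u hu => ?_⟩
  have hR' : (R : ℂ) ≠ 0 := ofReal_ne_zero.2 hR.ne'
  have hu' : u - z ≠ 0 := sub_ne_zero.2 hu
  simp only [smul_eq_mul, dslope_of_ne _ hu, slope_def_field, hfz, sub_zero,
    canonicalFactor_apply]
  field_simp

theorem prod_norm_canonicalFactor_mul_norm_le {ι : Type*} {R B : ℝ} (hR : 0 < R) {s : Finset ι}
    {p : ι → ℂ} (hp : ∀ i ∈ s, p i ∈ ball 0 R) (hinj : Set.InjOn p s) {f : ℂ → ℂ}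
    (hf : DiffContOnCl ℂ f (ball 0 R)) (hB : ∀ u ∈ sphere 0 R, ‖f u‖ ≤ B)
    (hzero : ∀ i ∈ s, f (p i) = 0) {w : ℂ} (hw : w ∈ closedBall 0 R) :
    (∏ i ∈ s, ‖canonicalFactor R (p i) w‖) * ‖f w‖ ≤ B := by
  classical
  induction s using Finset.induction generalizing f with
  | empty =>
    rw [← closure_ball 0 hR.ne'] at hw
    rw [← frontier_ball 0 hR.ne'] at hB
    simpa using norm_le_of_forall_mem_frontier_norm_le isBounded_ball hf hB hw
  | insert i s hi ih =>
    simp only [mem_insert, forall_eq_or_imp] at hp hzero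
    obtain ⟨g, hg, hfg⟩ := exists_diffContOnCl_eq_canonicalFactor_mul hR hp.1 hf hzero.1
    have hg_bound : ∀ u ∈ sphere (0 : ℂ) R, ‖g u‖ ≤ B := by
      intro u hu
      rw [hfg u (sphere_disjoint_ball.ne_of_mem hu hp.1), norm_mul,
        norm_canonicalFactor_eval_circle_eq_one hp.1 hu, one_mul]
      exact hB u hu
    have hg_zero : ∀ j ∈ s, g (p j) = 0 := by
      intro j hj
      have hne : p j ≠ p i := fun h =>
        hi (hinj (mem_insert_of_mem hj) (mem_insert_self i s) h ▸ hj)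
      rw [hfg _ hne, hzero.2 j hj, mul_zero]
    have hle : ‖canonicalFactor R (p i) w‖ * ‖f w‖ ≤ ‖g w‖ := by
      rcases eq_or_ne w (p i) with rfl | hne
      · simp
      · rw [hfg w hne, norm_mul]
    calc (∏ j ∈ insert i s, ‖canonicalFactor R (p j) w‖) * ‖f w‖
        = (∏ j ∈ s, ‖canonicalFactor R (p j) w‖) * (‖canonicalFactor R (p i) w‖ * ‖f w‖) := by
          rw [prod_insert hi]; ring
      _ ≤ (∏ j ∈ s, ‖canonicalFactor R (p j) w‖) * ‖g w‖ := by gcongr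
      _ ≤ B := ih hp.2 (hinj.mono (by simp)) hg hg_bound hg_zero

theorem norm_eval_basis_le {𝕜 ι : Type*} [NormedField 𝕜] [DecidableEq ι] {s : Finset ι}
    {p : ι → 𝕜} {r κ : ℝ} {i : ι} (hi : i ∈ s) (hp : ∀ j ∈ s, ‖p j‖ ≤ r) (hκ : 0 < κ)
    (hsep : κ ≤ ∏ j ∈ s.erase i, ‖p i - p j‖) {u : 𝕜} (hu : ‖u‖ ≤ r) :
    ‖(Lagrange.basis s p i).eval u‖ ≤ (2 * r) ^ (#s - 1) / κ := by
  have hnum : ∏ j ∈ s.erase i, ‖u - p j‖ ≤ (2 * r) ^ (#s - 1) := by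
    rw [← card_erase_of_mem hi, ← prod_const]
    refine prod_le_prod (fun _ _ => norm_nonneg _) fun j hj => ?_
    linarith [norm_sub_le u (p j), hp j (mem_of_mem_erase hj)]
  calc ‖(Lagrange.basis s p i).eval u‖
      = (∏ j ∈ s.erase i, ‖u - p j‖) / ∏ j ∈ s.erase i, ‖p i - p j‖ := by
        simp [Lagrange.basis, Lagrange.basisDivisor, eval_prod, prod_mul_distrib, norm_prod,
          div_eq_inv_mul]
    _ ≤ (2 * r) ^ (#s - 1) / κ :=
        div_le_div₀ ((prod_nonneg fun _ _ => norm_nonneg _).trans hnum) hnum hκ hsep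

theorem norm_eval_interpolate_le {𝕜 ι : Type*} [NormedField 𝕜] [DecidableEq ι] {s : Finset ι}
    {p r : ι → 𝕜} {u : 𝕜} {Λ : ℝ} (hΛ : ∀ i ∈ s, ‖(Lagrange.basis s p i).eval u‖ ≤ Λ) :
    ‖(Lagrange.interpolate s p r).eval u‖ ≤ (∑ i ∈ s, ‖r i‖) * Λ := by
  rw [Lagrange.interpolate_apply, eval_finsetSum, sum_mul]
  refine norm_sum_le_of_le _ fun i hi => ?_
  rw [eval_mul, eval_C, norm_mul]
  gcongr
  exact hΛ i hi

-- The difference between `f` and its Lagrange interpolant at the `p i` vanishes at all `p i`.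
theorem norm_le_of_small_on_nodes {ι : Type*} [DecidableEq ι] {R B Λ θ : ℝ} (hR : 0 < R)
    {s : Finset ι} {p : ι → ℂ} (hp : ∀ i ∈ s, p i ∈ ball 0 R) (hinj : Set.InjOn p s)
    (hΛ : ∀ i ∈ s, ∀ u ∈ closedBall 0 R, ‖(Lagrange.basis s p i).eval u‖ ≤ Λ) {f : ℂ → ℂ}
    (hf : DiffContOnCl ℂ f (ball 0 R)) (hB : ∀ u ∈ sphere 0 R, ‖f u‖ ≤ B) {w : ℂ}
    (hw : w ∈ closedBall 0 R) (hθ₀ : 0 ≤ θ)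
    (hθ : ∀ i ∈ s, 1 ≤ θ * ‖canonicalFactor R (p i) w‖) :
    ‖f w‖ ≤ (∑ i ∈ s, ‖f (p i)‖) * Λ + θ ^ #s * (B + (∑ i ∈ s, ‖f (p i)‖) * Λ) := by
  set E := ∑ i ∈ s, ‖f (p i)‖
  set L := Lagrange.interpolate s p fun i => f (p i) with hL
  have hL_le : ∀ u ∈ closedBall 0 R, ‖L.eval u‖ ≤ E * Λ := fun u hu =>
    norm_eval_interpolate_le fun i hi => hΛ i hi u hu
  have hdiff : (∏ i ∈ s, ‖canonicalFactor R (p i) w‖) * ‖f w - L.eval w‖ ≤ B + E * Λ := by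
    refine prod_norm_canonicalFactor_mul_norm_le hR hp hinj (f := fun u => f u - L.eval u)
      (hf.sub L.differentiable.diffContOnCl) (fun u hu => ?_) (fun i hi => ?_) hw
    · exact norm_sub_le_of_le (hB u hu) (hL_le u (sphere_subset_closedBall hu))
    · simp only [hL, Lagrange.eval_interpolate_at_node _ hinj hi, sub_self]
  have hprod : 1 ≤ θ ^ #s * ∏ i ∈ s, ‖canonicalFactor R (p i) w‖ := by
    rw [← prod_const, ← prod_mul_distrib]
    exact Finset.one_le_prod hθ
  calc ‖f w‖ = ‖L.eval w + (f w - L.eval w)‖ := by rw [add_sub_cancel]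
    _ ≤ ‖L.eval w‖ + ‖f w - L.eval w‖ := norm_add_le _ _
    _ ≤ E * Λ + (θ ^ #s * ∏ i ∈ s, ‖canonicalFactor R (p i) w‖) * ‖f w - L.eval w‖ := by
        gcongr
        · exact hL_le w hw
        · exact le_mul_of_one_le_left (norm_nonneg _) hprod
    _ ≤ E * Λ + θ ^ #s * (B + E * Λ) := by
        rw [mul_assoc]
        gcongr

/-! ### Separated nodes and small signed sums -/

theorem prod_erase_range_abs_sub {N i : ℕ} (hi : i ≤ N) :
    ∏ j ∈ (range (N + 1)).erase i, |(i : ℝ) - j| = i ! * (N - i)! := by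
  have hsplit : (range (N + 1)).erase i = range i ∪ Ico (i + 1) (N + 1) := by grind
  have hdisj : Disjoint (range i) (Ico (i + 1) (N + 1)) := by
    rw [disjoint_left]; grind
  rw [hsplit, prod_union hdisj]
  congr 1
  · rw [← prod_range_reflect, ← prod_range_add_one_eq_factorial]
    push_cast
    refine prod_congr rfl fun j hj => ?_
    rw [Nat.sub_sub, Nat.cast_sub (by grind)]
    push_cast
    rw [sub_sub_cancel, abs_of_nonneg (by positivity), add_comm]
  · rw [prod_Ico_eq_prod_range, ← prod_range_add_one_eq_factorial, Nat.add_sub_add_right]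
    push_cast
    refine prod_congr rfl fun j _ => ?_
    rw [abs_sub_comm, abs_of_nonneg] <;> linarith

theorem div_six_pow_le_factorial_mul_factorial {N i : ℕ} (hi : i ≤ N) :
    ((N : ℝ) / 6) ^ N ≤ i ! * (N - i)! := by
  have hexp : (N : ℝ) ^ N ≤ 3 ^ N * N ! := by
    calc (N : ℝ) ^ N ≤ Real.exp N * N ! :=
          (div_le_iff₀ (by positivity)).1 (Real.pow_div_factorial_le_exp _ N.cast_nonneg N)
      _ ≤ 3 ^ N * N ! := by
          rw [← Real.exp_one_pow]
          gcongr
          exact Real.exp_one_lt_three.le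
  have hchoose : (N ! : ℝ) ≤ 2 ^ N * (i ! * (N - i)!) := by
    rw [← Nat.choose_mul_factorial_mul_factorial hi, mul_assoc]
    push_cast
    gcongr
    exact_mod_cast Nat.choose_le_two_pow N i
  rw [div_pow, div_le_iff₀ (by positivity)]
  calc (N : ℝ) ^ N ≤ 3 ^ N * (2 ^ N * (i ! * (N - i)!)) := hexp.trans (by gcongr)
    _ = i ! * (N - i)! * 6 ^ N := by rw [← mul_assoc, ← mul_pow]; norm_num; ring

theorem exists_finset_separated {a b : ℝ} (hab : a < b) (N : ℕ) :
    ∃ s : Finset ℝ, #s = N + 1 ∧ (s : Set ℝ) ⊆ Set.Ioo a b ∧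
      ∀ x ∈ s, ((b - a) / 18) ^ N ≤ ∏ y ∈ s.erase x, |x - y| := by
  classical
  set h := (b - a) / (N + 2)
  have hba : b - a = h * (N + 2) := (div_mul_cancel₀ _ (by positivity)).symm
  have hh₀ : 0 < h := div_pos (sub_pos.2 hab) (by positivity)
  set p : ℕ → ℝ := fun i => a + h * (i + 1)
  have hp : p.Injective := fun i j hij => by simpa [p, hh₀.ne'] using hij
  refine ⟨(range (N + 1)).image p, by simp [card_image_of_injective _ hp], ?_, ?_⟩
  · simp only [coe_image, Set.image_subset_iff]
    intro i hi
    have hi' : (i : ℝ) ≤ N := by exact_mod_cast Nat.le_of_lt_succ (by simpa using hi)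
    constructor <;> simp only [p] <;> nlinarith [mul_nonneg hh₀.le (i.cast_nonneg (α := ℝ))]
  · intro x hx
    obtain ⟨i, hi, rfl⟩ := mem_image.1 hx
    have hi' : i ≤ N := Nat.le_of_lt_succ (mem_range.1 hi)
    have hsep : (b - a) / 18 ≤ h * (N / 6) ∨ N = 0 := by
      refine N.eq_zero_or_pos.symm.imp_left fun hN => ?_
      have : (1 : ℝ) ≤ N := by exact_mod_cast hN
      rw [hba]
      nlinarith
    calc ((b - a) / 18) ^ N ≤ (h * (N / 6)) ^ N := by
          rcases hsep with hsep | rfl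
          · exact pow_le_pow_left₀ (by linarith) hsep N
          · simp
      _ ≤ h ^ N * (i ! * (N - i)!) := by
          rw [mul_pow]
          gcongr
          exact div_six_pow_le_factorial_mul_factorial hi'
      _ = ∏ j ∈ (range (N + 1)).erase i, |p i - p j| := by
          have hp_sub (j : ℕ) : |p i - p j| = h * |(i : ℝ) - j| := by
            rw [show p i - p j = h * (i - j) by simp only [p]; ring, abs_mul, abs_of_pos hh₀]
          simp only [hp_sub, prod_mul_distrib, prod_const, prod_erase_range_abs_sub hi',
            card_erase_of_mem hi, card_range, add_tsub_cancel_right]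
      _ = ∏ y ∈ ((range (N + 1)).image p).erase (p i), |p i - y| := by
          rw [← image_erase hp, prod_image hp.injOn]

theorem exists_signed_sum_small {ι κ : Type*} [Fintype ι] [Fintype κ] {R δ : ℝ} (hδ : 0 < δ)
    {w : ι → κ → ℝ} (hw₀ : ∀ i j, 0 ≤ w i j) (hwR : ∀ i, ∑ j, w i j ≤ R)
    (hcard : (⌊R / δ⌋₊ + 1) ^ Fintype.card ι < 2 ^ Fintype.card κ) :
    ∃ b : κ → ℝ, b ≠ 0 ∧ (∀ j, b j = -1 ∨ b j = 0 ∨ b j = 1) ∧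
      ∀ i, |∑ j, b j * w i j| ≤ δ := by
  classical
  set S : Finset κ → ι → ℝ := fun T i => ∑ j ∈ T, w i j
  have hS₀ : ∀ T i, 0 ≤ S T i / δ := fun T i => div_nonneg (sum_nonneg fun j _ => hw₀ i j) hδ.le
  set box : Finset κ → ι → Fin (⌊R / δ⌋₊ + 1) := fun T i =>
    ⟨⌊S T i / δ⌋₊, Nat.lt_succ_of_le <| Nat.floor_mono <| div_le_div_of_nonneg_right
      ((sum_le_univ_sum_of_nonneg (hw₀ i)).trans (hwR i)) hδ.le⟩
  obtain ⟨T, T', hne, hbox⟩ : ∃ T T', T ≠ T' ∧ box T = box T' :=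
    Fintype.exists_ne_map_eq_of_card_lt box (by simpa using hcard)
  refine ⟨fun j => (if j ∈ T then 1 else 0) - if j ∈ T' then 1 else 0, fun h => hne ?_,
    fun j => by dsimp only; split_ifs <;> norm_num, fun i => ?_⟩
  · ext j
    have := congrFun h j
    by_cases hj : j ∈ T <;> by_cases hj' : j ∈ T' <;> simp_all
  · have hfloor : ⌊S T i / δ⌋₊ = ⌊S T' i / δ⌋₊ := congrArg Fin.val (congrFun hbox i)
    have hdiff : |S T i / δ - S T' i / δ| ≤ 1 :=
      (Int.abs_sub_lt_one_of_floor_eq_floor (by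
        rw [← Int.natCast_floor_eq_floor (hS₀ T i), ← Int.natCast_floor_eq_floor (hS₀ T' i),
          hfloor])).le
    calc |∑ j, ((if j ∈ T then 1 else 0) - if j ∈ T' then 1 else 0) * w i j|
        = |S T i - S T' i| := by simp [S, sub_mul]
      _ ≤ δ := by rwa [← sub_div, abs_div, abs_of_pos hδ, div_le_one hδ] at hdiff

/-! ### Sign changes -/

/-- The polynomial `∏ (c - X)` over the `c ∈ l`. -/
noncomputable def rootPoly {R : Type*} [CommRing R] (l : List R) : R[X] :=
  (l.map fun c => C c - X).prod

@[simp]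
theorem rootPoly_nil {R : Type*} [CommRing R] : rootPoly ([] : List R) = 1 := rfl

@[simp]
theorem rootPoly_cons {R : Type*} [CommRing R] (c : R) (l : List R) :
    rootPoly (c :: l) = (C c - X) * rootPoly l := by
  simp [rootPoly]

theorem eval_rootPoly_pos {l : List ℝ} {x : ℝ} (hl : ∀ c ∈ l, x < c) :
    0 < (rootPoly l).eval x := by
  induction l with
  | nil => simp
  | cons c l ih =>
    rw [List.forall_mem_cons] at hl
    simpa using mul_pos (sub_pos.2 hl.1) (ih hl.2)

theorem norm_aeval_rootPoly_le {A : Type*} [NormedRing A] [NormedAlgebra ℝ A] [NormOneClass A]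
    {l : List ℝ} (hl : ∀ c ∈ l, 0 ≤ c) {u : A} {r : ℝ} (hu : ‖u‖ ≤ r) :
    ‖aeval u (rootPoly l)‖ ≤ (rootPoly l).eval (-r) := by
  induction l with
  | nil => simp
  | cons c l ih =>
    rw [List.forall_mem_cons] at hl
    have hc : ‖algebraMap ℝ A c - u‖ ≤ c + r := by
      refine norm_sub_le_of_le ?_ hu
      rw [norm_algebraMap', Real.norm_of_nonneg hl.1]
    simpa using norm_mul_le_of_le hc (ih hl.2)

theorem pow_length_mul_eval_rootPoly_le {l : List ℝ} (hl : ∀ c ∈ l, 0 ≤ c) {ρ : ℝ} (hρ₀ : 0 ≤ ρ)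
    (hρ₁ : ρ ≤ 1) : ρ ^ l.length * (rootPoly l).eval (-1) ≤ (rootPoly l).eval (-ρ) := by
  induction l with
  | nil => simp
  | cons c l ih =>
    rw [List.forall_mem_cons] at hl
    have hc : ρ * (c + 1) ≤ c + ρ := by nlinarith
    have hR : 0 ≤ (rootPoly l).eval (-1) :=
      (eval_rootPoly_pos fun c hc => by linarith [hl.2 c hc]).le
    calc ρ ^ (c :: l).length * (rootPoly (c :: l)).eval (-1)
        = (ρ * (c + 1)) * (ρ ^ l.length * (rootPoly l).eval (-1)) := by simp; ring
      _ ≤ (c + ρ) * (rootPoly l).eval (-ρ) := by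
          gcongr
          · linarith [hl.1]
          · exact ih hl.2
      _ = (rootPoly (c :: l)).eval (-ρ) := by simp

theorem abs_sum_mul_rootPoly_le {ι : Type*} {s : Finset ι} {v x : ι → ℝ} {δ : ℝ} {q : ℕ}
    (hmom : ∀ k < q, |∑ i ∈ s, v i * x i ^ k| ≤ δ) {l : List ℝ} (hl : ∀ c ∈ l, 0 ≤ c) {k : ℕ}
    (hk : k + l.length < q) :
    |∑ i ∈ s, v i * x i ^ k * (rootPoly l).eval (x i)| ≤ δ * (rootPoly l).eval (-1) := by
  induction l generalizing k with
  | nil => simpa using hmom k (by simpa using hk)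
  | cons c l ih =>
    rw [List.forall_mem_cons] at hl
    rw [List.length_cons] at hk
    set S : ℕ → ℝ := fun k => ∑ i ∈ s, v i * x i ^ k * (rootPoly l).eval (x i)
    have hS : ∑ i ∈ s, v i * x i ^ k * (rootPoly (c :: l)).eval (x i) = c * S k - S (k + 1) := by
      simp only [S, mul_sum, ← sum_sub_distrib]
      refine sum_congr rfl fun i _ => ?_
      simp
      ring
    calc |∑ i ∈ s, v i * x i ^ k * (rootPoly (c :: l)).eval (x i)|
        ≤ c * |S k| + |S (k + 1)| := by
          rw [hS, ← abs_of_nonneg hl.1, ← abs_mul, abs_of_nonneg hl.1]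
          exact abs_sub _ _
      _ ≤ c * (δ * (rootPoly l).eval (-1)) + δ * (rootPoly l).eval (-1) :=
          add_le_add (mul_le_mul_of_nonneg_left (ih hl.2 (by omega)) hl.1)
            (ih hl.2 (by omega))
      _ = δ * (rootPoly (c :: l)).eval (-1) := by simp; ring

/-- `HasSignChanges f A q` means that `f` has at least `q` sign changes in `A`. -/
def HasSignChanges (f : ℝ → ℝ) (A : Set ℝ) (q : ℕ) : Prop :=
  ∃ t : Fin (q + 1) → ℝ, StrictMono t ∧ (∀ i, t i ∈ A) ∧
    ∀ i : Fin q, f (t i.castSucc) * f (t i.succ) < 0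

theorem HasSignChanges.of_comp {f g : ℝ → ℝ} {A B : Set ℝ} {q : ℕ}
    (h : HasSignChanges (f ∘ g) A q) (hg : StrictMonoOn g A) (hAB : Set.MapsTo g A B) :
    HasSignChanges f B q := by
  obtain ⟨t, ht, htA, hsign⟩ := h
  exact ⟨g ∘ t, fun i j hij => hg (htA i) (htA j) (ht hij), fun i => hAB (htA i), hsign⟩

theorem hasSignChanges_of_isChain {f : ℝ → ℝ} {A : Set ℝ} {x : ℝ} {l : List ℝ}
    (hl : (x :: l).IsChain fun y z => y < z ∧ f y * f z < 0) (hA : ∀ y ∈ x :: l, y ∈ A) :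
    HasSignChanges f A l.length := by
  have hlt : (x :: l).IsChain (· < ·) := hl.imp fun _ _ h => h.1
  refine ⟨(x :: l).get, List.SortedLT.strictMono_get hlt.sortedLT,
    fun i => hA _ (List.get_mem _ _), fun i => ?_⟩
  exact (List.isChain_iff_getElem.1 hl i (by simp)).2

/-- The points `x₀ < c₁ < c₂ < ⋯` of `s`, with `l = [c₁, c₂, …]`, record all the sign changes of `f`
along `s`: `x₀` is the first point at which `f` does not vanish, and each `cᵢ` is a point from which
on `f` has the opposite sign (or vanishes), so that `f x * ∏ (cᵢ - x)` has the sign of `f x₀`. -/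
structure IsSignChain (f : ℝ → ℝ) (s : Finset ℝ) (x₀ : ℝ) (l : List ℝ) : Prop where
  isChain : (x₀ :: l).IsChain fun x y => x < y ∧ f x * f y < 0
  mem : ∀ x ∈ x₀ :: l, x ∈ s
  ne_zero : f x₀ ≠ 0
  eq_zero_of_lt : ∀ x ∈ s, x < x₀ → f x = 0
  nonneg : ∀ x ∈ s, 0 ≤ f x₀ * (f x * (rootPoly l).eval x)

namespace IsSignChain

variable {f : ℝ → ℝ} {s : Finset ℝ} {b x₀ : ℝ} {l : List ℝ}

theorem singleton (hfb : f b ≠ 0) (hs : ∀ x ∈ s, f x = 0) :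
    IsSignChain f (insert b s) b [] where
  isChain := .singleton b
  mem := by simp
  ne_zero := hfb
  eq_zero_of_lt x hx hxb := hs x ((mem_insert.1 hx).resolve_left hxb.ne)
  nonneg := by simp +contextual [rootPoly, hs, mul_self_nonneg]

theorem insert_of_eq_zero (h : IsSignChain f s x₀ l) (hfb : f b = 0) :
    IsSignChain f (insert b s) x₀ l where
  isChain := h.isChain
  mem x hx := mem_insert_of_mem (h.mem x hx)
  ne_zero := h.ne_zero
  eq_zero_of_lt := by grind [h.eq_zero_of_lt]
  nonneg x hx := by
    rcases mem_insert.1 hx with rfl | hx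
    · simp [hfb]
    · exact h.nonneg x hx

theorem eval_rootPoly_pos_of_lt (h : IsSignChain f s x₀ l) (hb : ∀ x ∈ s, b < x) :
    0 < (rootPoly l).eval b :=
  eval_rootPoly_pos fun c hc => hb c (h.mem c (.tail _ hc))

theorem replace_head (h : IsSignChain f s x₀ l) (hb : ∀ x ∈ s, b < x) (hsame : 0 < f b * f x₀) :
    IsSignChain f (insert b s) b l where
  isChain := by
    have hl := h.isChain
    cases l with
    | nil => exact .singleton b
    | cons c l =>
      rw [List.isChain_cons_cons] at hl ⊢
      refine ⟨⟨hb c (h.mem c (by simp)), ?_⟩, hl.2⟩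
      refine neg_of_mul_neg_left (b := f x₀ ^ 2) ?_ (sq_nonneg _)
      linarith [mul_neg_of_pos_of_neg hsame hl.1.2]
  mem := by grind [h.mem]
  ne_zero := left_ne_zero_of_mul hsame.ne'
  eq_zero_of_lt := by grind
  nonneg x hx := by
    rcases mem_insert.1 hx with rfl | hx
    · rw [← mul_assoc]
      exact mul_nonneg (mul_self_nonneg _) (h.eval_rootPoly_pos_of_lt hb).le
    · refine nonneg_of_mul_nonneg_left ?_ (sq_pos_of_ne_zero h.ne_zero)
      linarith [mul_nonneg hsame.le (h.nonneg x hx)]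

theorem cons (h : IsSignChain f s x₀ l) (hb : ∀ x ∈ s, b < x) (hopp : f b * f x₀ < 0) :
    IsSignChain f (insert b s) b (x₀ :: l) where
  isChain := .cons_cons ⟨hb x₀ (h.mem x₀ (by simp)), hopp⟩ h.isChain
  mem := by grind [h.mem]
  ne_zero := left_ne_zero_of_mul hopp.ne
  eq_zero_of_lt := by grind
  nonneg x hx := by
    rw [rootPoly_cons, eval_mul, eval_sub, eval_C, eval_X]
    rcases mem_insert.1 hx with rfl | hx
    · have hx₀ : 0 < x₀ - x := sub_pos.2 (hb x₀ (h.mem x₀ (by simp)))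
      have := mul_pos hx₀ (h.eval_rootPoly_pos_of_lt hb)
      rw [← mul_assoc]
      exact mul_nonneg (mul_self_nonneg _) this.le
    · rcases lt_or_ge x x₀ with hlt | hge
      · simp [h.eq_zero_of_lt x hx hlt]
      · refine nonneg_of_mul_nonneg_left ?_ (sq_pos_of_ne_zero h.ne_zero)
        linarith [mul_nonneg (mul_nonneg_of_nonpos_of_nonpos hopp.le (sub_nonpos.2 hge))
          (h.nonneg x hx)]

end IsSignChain

theorem exists_isSignChain {f : ℝ → ℝ} {s : Finset ℝ} (hs : ∃ x ∈ s, f x ≠ 0) :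
    ∃ x₀ l, IsSignChain f s x₀ l := by
  induction s using Finset.induction_on_min with
  | empty => simp at hs
  | insert b s hb ih =>
    simp only [mem_insert, exists_eq_or_imp] at hs
    by_cases hfs : ∃ x ∈ s, f x ≠ 0
    · obtain ⟨x₀, l, h⟩ := ih hfs
      rcases lt_trichotomy (f b * f x₀) 0 with hopp | hfb | hsame
      · exact ⟨b, x₀ :: l, h.cons hb hopp⟩
      · exact ⟨x₀, l, h.insert_of_eq_zero ((mul_eq_zero_iff_right h.ne_zero).1 hfb)⟩
      · exact ⟨b, l, h.replace_head hb hsame⟩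
    · exact ⟨b, [], .singleton (hs.resolve_right hfs) (by simpa using hfs)⟩

theorem IsSignChain.sum_abs_mul_rootPoly_le {f : ℝ → ℝ} {s : Finset ℝ} {x₀ δ : ℝ} {l : List ℝ}
    {q : ℕ} (h : IsSignChain f s x₀ l) (hmom : ∀ k < q, |∑ x ∈ s, f x * x ^ k| ≤ δ)
    (hl : ∀ c ∈ l, 0 ≤ c) (hlq : l.length < q) :
    ∑ x ∈ s, |f x * (rootPoly l).eval x| ≤ δ * (rootPoly l).eval (-1) := by
  calc ∑ x ∈ s, |f x * (rootPoly l).eval x| = |∑ x ∈ s, f x * (rootPoly l).eval x| := by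
        rcases h.ne_zero.lt_or_gt with hneg | hpos
        · have hle : ∀ x ∈ s, f x * (rootPoly l).eval x ≤ 0 := fun x hx =>
            nonpos_of_mul_nonneg_right (h.nonneg x hx) hneg
          rw [abs_of_nonpos (sum_nonpos hle), ← sum_neg_distrib]
          exact sum_congr rfl fun x hx => abs_of_nonpos (hle x hx)
        · have hge : ∀ x ∈ s, 0 ≤ f x * (rootPoly l).eval x := fun x hx =>
            nonneg_of_mul_nonneg_right (h.nonneg x hx) hpos
          rw [abs_of_nonneg (sum_nonneg hge)]
          exact sum_congr rfl fun x hx => abs_of_nonneg (hge x hx)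
    _ ≤ δ * (rootPoly l).eval (-1) := by
        simpa using abs_sum_mul_rootPoly_le hmom hl (k := 0) (by simpa using hlq)

/-! ### The disk map -/

/-- The map `u ↦ (1 + 2 B u) / 3`, where `B u = (u + k) / (1 + k u)` with `k = 1 - 3 a` is an
automorphism of the unit disk. It maps the unit disk onto the disk with diameter `(-1/3, 1)`, and
`0` to the left endpoint `1 - 2 a` of the interval on which sign changes are sought. -/
def diskMap {𝕜 : Type*} [Field 𝕜] (a u : 𝕜) : 𝕜 :=
  (1 + 2 * ((u + (1 - 3 * a)) / (1 + (1 - 3 * a) * u))) / 3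

theorem ofReal_diskMap (a u : ℝ) : ((diskMap a u : ℝ) : ℂ) = diskMap (a : ℂ) u := by
  simp [diskMap]

section diskMap

variable {a : ℝ}

theorem diskMap_neg_eq_zero (ha₀ : 0 < a) (ha : a ≤ 1 / 3) :
    diskMap a (-((1 - 2 * a) / (1 - a))) = 0 := by
  have h₁ : 1 - a ≠ 0 := by linarith
  have h₂ : 1 + (1 - 3 * a) * -((1 - 2 * a) / (1 - a)) = 2 * a * (2 - 3 * a) / (1 - a) := by
    field_simp
    ring
  have h₃ : 2 * a * (2 - 3 * a) / (1 - a) ≠ 0 := by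
    have : 0 < 2 - 3 * a := by linarith
    positivity
  have h₄ : -((1 - 2 * a) / (1 - a)) + (1 - 3 * a) =
      -1 / 2 * (2 * a * (2 - 3 * a) / (1 - a)) := by
    field_simp
    ring
  rw [diskMap, h₂, h₄, mul_div_cancel_right₀ _ h₃]
  norm_num

theorem diskMap_strictMonoOn (ha₀ : 0 < a) (ha : a ≤ 1 / 3) :
    StrictMonoOn (diskMap a) (Set.Ici 0) := by
  intro u hu v hv huv
  have hk : 0 ≤ 1 - 3 * a := by linarith
  have hden : ∀ w ∈ Set.Ici (0 : ℝ), 0 < 1 + (1 - 3 * a) * w := fun w hw => by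
    have := mul_nonneg hk hw
    linarith
  have hmobius : (u + (1 - 3 * a)) / (1 + (1 - 3 * a) * u) <
      (v + (1 - 3 * a)) / (1 + (1 - 3 * a) * v) := by
    rw [div_lt_div_iff₀ (hden u hu) (hden v hv)]
    have : 0 < (v - u) * (1 - (1 - 3 * a) ^ 2) := mul_pos (sub_pos.2 huv) (by nlinarith)
    linarith
  simp only [diskMap]
  linarith

theorem diskMap_mapsTo (ha₀ : 0 < a) (ha : a ≤ 1 / 3) :
    Set.MapsTo (diskMap a) (Set.Ioo 0 (1 / 3)) (Set.Ioo (1 - 2 * a) (1 - a)) := by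
  have h₀ : diskMap a 0 = 1 - 2 * a := by
    simp [diskMap]
    ring
  have h₁ : diskMap a (1 / 3) ≤ 1 - a := by
    have : 0 < 4 - 3 * a := by linarith
    have heq : diskMap a (1 / 3) = 1 - 4 * a / (4 - 3 * a) := by
      rw [diskMap, show 1 + (1 - 3 * a) * (1 / 3) = (4 - 3 * a) / 3 by ring]
      field_simp
      ring
    rw [heq, sub_le_sub_iff_left, le_div_iff₀ this]
    nlinarith
  intro u hu
  have hmono := diskMap_strictMonoOn ha₀ ha
  exact ⟨h₀ ▸ hmono (by simp) hu.1.le hu.1, (hmono hu.1.le (by simp) hu.2).trans_le h₁⟩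

theorem one_add_mul_ne_zero (ha₀ : 0 < a) (ha : a ≤ 1 / 3) {u : ℂ} (hu : ‖u‖ ≤ 1) :
    1 + (1 - 3 * (a : ℂ)) * u ≠ 0 := by
  have hk : ‖1 - 3 * (a : ℂ)‖ < 1 := by
    rw [show 1 - 3 * (a : ℂ) = (1 - 3 * a : ℝ) by simp, norm_real, Real.norm_eq_abs, abs_lt]
    constructor <;> linarith
  have hku : ‖(1 - 3 * (a : ℂ)) * u‖ < 1 := by
    rw [norm_mul]
    exact mul_lt_one_of_nonneg_of_lt_one_left (norm_nonneg _) hk hu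
  intro h
  rw [eq_neg_of_add_eq_zero_right h, norm_neg, norm_one] at hku
  exact lt_irrefl 1 hku

theorem differentiableOn_diskMap (ha₀ : 0 < a) (ha : a ≤ 1 / 3) :
    DifferentiableOn ℂ (diskMap (a : ℂ)) (closedBall 0 1) := by
  have hden : ∀ u ∈ closedBall (0 : ℂ) 1, 1 + (1 - 3 * (a : ℂ)) * u ≠ 0 := fun u hu =>
    one_add_mul_ne_zero ha₀ ha (mem_closedBall_zero_iff.1 hu)
  unfold diskMap
  fun_prop (disch := assumption)

theorem norm_diskMap_sub (ha₀ : 0 < a) (ha : a ≤ 1 / 3) {u : ℂ} (hu : ‖u‖ = 1) :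
    ‖diskMap (a : ℂ) u - 1 / 3‖ = 2 / 3 := by
  have hden := one_add_mul_ne_zero ha₀ ha hu.le
  have hnorm : ‖u + (1 - 3 * (a : ℂ))‖ = ‖1 + (1 - 3 * (a : ℂ)) * u‖ := by
    calc ‖u + (1 - 3 * (a : ℂ))‖ = ‖u‖ * ‖conj (u + (1 - 3 * (a : ℂ)))‖ := by
          rw [hu, one_mul, RCLike.norm_conj]
      _ = ‖1 + (1 - 3 * (a : ℂ)) * u‖ := by
          rw [← norm_mul, map_add, mul_add, Complex.mul_conj']
          simp [hu, mul_comm, map_ofNat]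
  rw [show diskMap (a : ℂ) u - 1 / 3 = 2 / 3 * ((u + (1 - 3 * a)) / (1 + (1 - 3 * a) * u)) by
    rw [diskMap]; ring, norm_mul, norm_div (u + _), hnorm, div_self (norm_ne_zero_iff.2 hden)]
  norm_num

end diskMap

theorem norm_aeval_mul_one_sub_norm_le {A : Type*} [NormedRing A] [NormedAlgebra ℝ A]
    [NormOneClass A] {Q : ℝ[X]} {M : ℝ} (hQ : ∀ k, |Q.coeff k| ≤ M) {x : A} (hx : ‖x‖ ≤ 1) :
    ‖aeval x Q‖ * (1 - ‖x‖) ≤ M := by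
  have hM : 0 ≤ M := (abs_nonneg _).trans (hQ 0)
  have hsum : ‖aeval x Q‖ ≤ M * ∑ k ∈ range (Q.natDegree + 1), ‖x‖ ^ k := by
    rw [aeval_eq_sum_range, mul_sum]
    refine norm_sum_le_of_le _ fun k _ => ?_
    rw [norm_smul, Real.norm_eq_abs]
    gcongr
    exacts [hQ k, norm_pow_le x k]
  calc ‖aeval x Q‖ * (1 - ‖x‖)
      ≤ M * (∑ k ∈ range (Q.natDegree + 1), ‖x‖ ^ k) * (1 - ‖x‖) := by
        gcongr
    _ = M * (1 - ‖x‖ ^ (Q.natDegree + 1)) := by rw [mul_assoc, geom_sum_mul_neg]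
    _ ≤ M := mul_le_of_le_one_right hM (sub_le_self _ (by positivity))

theorem norm_one_sub_sq_le {x : ℂ} (hx : ‖x - 1 / 3‖ = 2 / 3) :
    ‖1 - x‖ ^ 2 ≤ 4 * (1 - ‖x‖) := by
  have hx' : ‖x - 1 / 3‖ ^ 2 = 4 / 9 := by rw [hx]; norm_num
  have hsq : ‖1 - x‖ ^ 2 = 2 * (1 - ‖x‖ ^ 2) := by
    simp only [← Complex.normSq_eq_norm_sq, Complex.normSq_apply] at hx' ⊢
    simp at hx' ⊢
    linarith
  have := sq_nonneg (1 - ‖x‖)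
  linarith

theorem norm_aeval_mul_one_sub_sq_le {Q : ℝ[X]} {M : ℝ} (hQ : ∀ k, |Q.coeff k| ≤ M) {x : ℂ}
    (hx : ‖x - 1 / 3‖ = 2 / 3) : ‖aeval x Q * (1 - x) ^ 2‖ ≤ 4 * M := by
  have hsq := norm_one_sub_sq_le hx
  have hx₁ : ‖x‖ ≤ 1 := by linarith [sq_nonneg ‖1 - x‖]
  calc ‖aeval x Q * (1 - x) ^ 2‖ ≤ ‖aeval x Q‖ * (4 * (1 - ‖x‖)) := by
        rw [norm_mul, norm_pow]
        gcongr
    _ ≤ 4 * M := by linarith [norm_aeval_mul_one_sub_norm_le hQ hx₁]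

theorem one_le_mul_norm_canonicalFactor {x ρ : ℝ} (hx₀ : 0 < x) (hx : x ≤ 1 / 3) (hρ₀ : 0 ≤ ρ)
    (hρ₁ : ρ ≤ 1) : 1 ≤ (1 + ρ) / 2 * ‖canonicalFactor 1 x (-ρ)‖ := by
  have hnorm : ‖canonicalFactor 1 x (-ρ)‖ = (1 + x * ρ) / (ρ + x) := by
    have h : canonicalFactor 1 x (-ρ) = ((-((1 + x * ρ) / (ρ + x)) : ℝ) : ℂ) := by
      rw [canonicalFactor_apply]
      push_cast
      rw [← div_neg]
      congr 1
      · simp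
      · ring
    rw [h, norm_real, norm_neg, Real.norm_of_nonneg (by positivity)]
  rw [hnorm, div_mul_div_comm, one_le_div (by positivity)]
  have : 0 ≤ (1 - ρ) * (1 - x * (2 + ρ)) := mul_nonneg (by linarith) (by nlinarith)
  linarith

/-- The function `Q x * (1 - x) ^ 2` on the disk with diameter `(-1/3, 1)`, pulled back to the unit
disk by `diskMap a`, times `R`. The weight `(1 - x) ^ 2` absorbs the growth of `Q` near `x = 1`, so
that the bound on the unit circle does not depend on the degree of `Q`. -/
noncomputable def pullback (a : ℝ) (Q R : ℝ[X]) (u : ℂ) : ℂ :=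
  aeval (diskMap (a : ℂ) u) Q * (1 - diskMap (a : ℂ) u) ^ 2 * aeval u R

theorem pullback_ofReal (a : ℝ) (Q R : ℝ[X]) (x : ℝ) :
    pullback a Q R x =
      ((Q.eval (diskMap a x) * (1 - diskMap a x) ^ 2 * R.eval x : ℝ) : ℂ) := by
  have h (T : ℝ[X]) (y : ℝ) : aeval (y : ℂ) T = ((T.eval y : ℝ) : ℂ) := aeval_algebraMap_apply ℂ y T
  simp [pullback, ← ofReal_diskMap, h]

section

variable {a : ℝ}

theorem diffContOnCl_pullback (ha₀ : 0 < a) (ha : a ≤ 1 / 3) (Q R : ℝ[X]) :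
    DiffContOnCl ℂ (pullback a Q R) (ball 0 1) := by
  refine DifferentiableOn.diffContOnCl ?_
  rw [closure_ball _ one_ne_zero]
  have hφ := differentiableOn_diskMap ha₀ ha
  have hQ := Q.differentiable_aeval.comp_differentiableOn hφ
  exact (hQ.mul ((hφ.const_sub 1).pow 2)).mul R.differentiable_aeval.differentiableOn

theorem norm_pullback_le_abs (ha₀ : 0 < a) (ha : a ≤ 1 / 3) (Q R : ℝ[X]) {x : ℝ}
    (hx : x ∈ Set.Ioo (0 : ℝ) (1 / 3)) :
    ‖pullback a Q R x‖ ≤ |Q.eval (diskMap a x) * R.eval x| := by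
  have hφ := diskMap_mapsTo ha₀ ha hx
  have h₁ : |1 - diskMap a x| ≤ 1 := by rw [abs_le]; constructor <;> linarith [hφ.1, hφ.2]
  rw [pullback_ofReal, norm_real, Real.norm_eq_abs, abs_mul, abs_mul, abs_mul, abs_pow]
  gcongr
  exact mul_le_of_le_one_right (abs_nonneg _) (pow_le_one₀ (abs_nonneg _) h₁)

theorem eval_rootPoly_le_of_small_on_nodes (ha₀ : 0 < a) (ha : a ≤ 1 / 3) {ρ : ℝ} (hρ₀ : 0 ≤ ρ)
    (hρ₁ : ρ < 1) (hρ : diskMap a (-ρ) = 0) {Q : ℝ[X]} {M : ℝ}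
    (hQM : ∀ k, |Q.coeff k| ≤ M) (hQ₀ : 1 ≤ |Q.coeff 0|) {l : List ℝ} (hl : ∀ c ∈ l, 0 ≤ c)
    {s : Finset ℝ} (hs : (s : Set ℝ) ⊆ Set.Ioo 0 (1 / 3)) {Λ η : ℝ} (hΛ₀ : 0 ≤ Λ)
    (hΛ : ∀ x ∈ s, ∀ u ∈ closedBall (0 : ℂ) 1, ‖(Lagrange.basis s ofReal x).eval u‖ ≤ Λ)
    (hη : ∑ x ∈ s, |Q.eval (diskMap a x) * (rootPoly l).eval x| ≤ η) :
    (rootPoly l).eval (-ρ) ≤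
      η * Λ + ((1 + ρ) / 2) ^ #s * (4 * M * (rootPoly l).eval (-1) + η * Λ) := by
  have hsphere : ∀ u ∈ sphere (0 : ℂ) 1,
      ‖pullback a Q (rootPoly l) u‖ ≤ 4 * M * (rootPoly l).eval (-1) := by
    intro u hu
    rw [mem_sphere_zero_iff_norm] at hu
    exact norm_mul_le_of_le (norm_aeval_mul_one_sub_sq_le hQM (norm_diskMap_sub ha₀ ha hu))
      (norm_aeval_rootPoly_le hl hu.le)
  have hnodes : ∑ x ∈ s, ‖pullback a Q (rootPoly l) x‖ ≤ η :=
    (sum_le_sum fun x hx => norm_pullback_le_abs ha₀ ha _ _ (hs hx)).trans hη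
  have hroot : (rootPoly l).eval (-ρ) ≤ ‖pullback a Q (rootPoly l) (-ρ : ℝ)‖ := by
    rw [pullback_ofReal, hρ, norm_real, ← coeff_zero_eq_eval_zero]
    refine (le_abs_self _).trans ?_
    simpa [abs_mul] using le_mul_of_one_le_left (abs_nonneg ((rootPoly l).eval (-ρ))) hQ₀
  have hball : ∀ x ∈ s, (x : ℂ) ∈ ball 0 1 := fun x hx => by
    have := hs hx
    rw [mem_ball_zero_iff, norm_real, Real.norm_of_nonneg this.1.le]
    linarith [this.2]
  refine hroot.trans <| (norm_le_of_small_on_nodes one_pos hball ofReal_injective.injOn hΛ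
    (diffContOnCl_pullback ha₀ ha Q (rootPoly l)) hsphere (w := (-ρ : ℝ)) (θ := (1 + ρ) / 2)
    ?_ (by positivity) fun x hx => ?_).trans (by gcongr)
  · simpa [abs_of_nonneg hρ₀] using hρ₁.le
  · simpa using one_le_mul_norm_canonicalFactor (hs hx).1 (hs hx).2.le hρ₀ hρ₁.le

end

theorem exists_eq_X_pow_mul_coeff_zero_ne_zero {R : Type*} [Semiring R] {P : R[X]} (hP : P ≠ 0) :
    ∃ k ≤ P.natDegree, ∃ Q : R[X], P = X ^ k * Q ∧ Q.coeff 0 ≠ 0 ∧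
      ∀ i, Q.coeff i = P.coeff (i + k) := by
  obtain ⟨Q, hQ⟩ : X ^ P.natTrailingDegree ∣ P :=
    X_pow_dvd_iff.2 fun d hd => coeff_eq_zero_of_lt_natTrailingDegree hd
  have hcoeff (i : ℕ) : Q.coeff i = P.coeff (i + P.natTrailingDegree) := by
    rw [← coeff_X_pow_mul Q P.natTrailingDegree i, ← hQ]
  refine ⟨_, P.natTrailingDegree_le_natDegree, Q, hQ, ?_, hcoeff⟩
  rw [hcoeff, zero_add]
  exact trailingCoeff_nonzero_iff_nonzero.2 hP

theorem exists_finset_norm_eval_basis_le (N : ℕ) :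
    ∃ s : Finset ℝ, #s = N + 1 ∧ (s : Set ℝ) ⊆ Set.Ioo 0 (1 / 3) ∧
      ∀ x ∈ s, ∀ u ∈ closedBall (0 : ℂ) 1, ‖(Lagrange.basis s ofReal x).eval u‖ ≤ 108 ^ N := by
  obtain ⟨s, hcard, hs, hsep⟩ := exists_finset_separated (a := 0) (b := 1 / 3) (by norm_num) N
  refine ⟨s, hcard, hs, fun x hx u hu => ?_⟩
  have hnorm : ∀ y ∈ s, ‖(y : ℂ)‖ ≤ 1 := fun y hy => by
    have := hs hy
    rw [norm_real, Real.norm_of_nonneg this.1.le]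
    linarith [this.2]
  have hsep' : (1 / 54 : ℝ) ^ N ≤ ∏ y ∈ s.erase x, ‖(x : ℂ) - y‖ := by
    convert hsep x hx using 2
    · norm_num
    · rw [← ofReal_sub, norm_real, Real.norm_eq_abs]
  calc ‖(Lagrange.basis s ofReal x).eval u‖ ≤ (2 * 1) ^ (#s - 1) / (1 / 54) ^ N :=
        norm_eval_basis_le hx hnorm (by positivity) hsep' (mem_closedBall_zero_iff.1 hu)
    _ = 108 ^ N := by
        rw [hcard, Nat.add_sub_cancel, ← div_pow]
        norm_num

theorem exp_neg_three_mul_le_one_sub {t : ℝ} (ht₀ : 0 ≤ t) (ht : t ≤ 2 / 3) :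
    Real.exp (-(3 * t)) ≤ 1 - t := by
  have hpos : 0 < 1 - t := by linarith
  rw [← Real.le_log_iff_exp_le hpos]
  refine le_trans ?_ (Real.one_sub_inv_le_log_of_pos hpos)
  have : (1 - t)⁻¹ ≤ 1 + 3 * t := by
    rw [inv_le_iff_one_le_mul₀ hpos]
    nlinarith
  linarith

theorem exp_le_one_sub_two_mul_pow {a : ℝ} (ha₀ : 0 ≤ a) (ha : a ≤ 1 / 3) (n : ℕ) :
    Real.exp (-(6 * (a * n))) ≤ (1 - 2 * a) ^ n := by
  calc Real.exp (-(6 * (a * n))) = Real.exp (-(3 * (2 * a))) ^ n := by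
        rw [← Real.exp_nat_mul]
        ring_nf
    _ ≤ (1 - 2 * a) ^ n := by
        gcongr
        exact exp_neg_three_mul_le_one_sub (by linarith) (by linarith)

theorem ceil_four_mul_le {X : ℝ} (hX : 1 ≤ X) : (⌈4 * X⌉₊ : ℝ) ≤ 5 * X := by
  linarith [Nat.ceil_lt_add_one (show 0 ≤ 4 * X by linarith)]

theorem eight_mul_pow_ceil_lt_exp {X : ℝ} (hX : 3 ≤ X) :
    8 * 108 ^ ⌈4 * X⌉₊ < Real.exp (26 * X) := by
  have he : (2.7 : ℝ) ≤ Real.exp 1 := by linarith [Real.exp_one_gt_d9]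
  have h108 : (108 : ℝ) ≤ Real.exp 5 := by
    calc (108 : ℝ) ≤ 2.7 ^ 5 := by norm_num
      _ ≤ Real.exp 1 ^ 5 := by gcongr
      _ = Real.exp 5 := by rw [← Real.exp_nat_mul]; norm_num
  have h8 : (8 : ℝ) < Real.exp X := by
    calc (8 : ℝ) < 2.7 ^ 3 := by norm_num
      _ ≤ Real.exp 1 ^ 3 := by gcongr
      _ = Real.exp 3 := by rw [← Real.exp_nat_mul]; norm_num
      _ ≤ Real.exp X := Real.exp_le_exp.2 hX
  calc 8 * (108 : ℝ) ^ ⌈4 * X⌉₊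
      < Real.exp X * 108 ^ ⌈4 * X⌉₊ := by gcongr
    _ ≤ Real.exp X * Real.exp 5 ^ ⌈4 * X⌉₊ := by gcongr
    _ = Real.exp (X + 5 * ⌈4 * X⌉₊) := by
        rw [← Real.exp_nat_mul, ← Real.exp_add]
        ring_nf
    _ ≤ Real.exp (26 * X) := by
        rw [Real.exp_le_exp]
        linarith [ceil_four_mul_le (X := X) (by linarith)]

section

variable {a : ℝ}

theorem eval_rootPoly_le_mul_sum (ha₀ : 0 < a) (ha : a ≤ 1 / 3) {ρ : ℝ} (hρ₀ : 0 ≤ ρ) (hρ₁ : ρ < 1)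
    (hρ : diskMap a (-ρ) = 0) {Q : ℝ[X]} {M : ℝ} (hQM : ∀ k, |Q.coeff k| ≤ M)
    (hQ₀ : 1 ≤ |Q.coeff 0|) {l : List ℝ} (hl : ∀ c ∈ l, 0 ≤ c) (hρl : 1 / 2 ≤ ρ ^ l.length)
    {s : Finset ℝ} (hs : (s : Set ℝ) ⊆ Set.Ioo 0 (1 / 3))
    (hρs : 4 * M * ((1 + ρ) / 2) ^ #s ≤ 1 / 4) {Λ : ℝ} (hΛ₀ : 0 ≤ Λ)
    (hΛ : ∀ x ∈ s, ∀ u ∈ closedBall (0 : ℂ) 1, ‖(Lagrange.basis s ofReal x).eval u‖ ≤ Λ) :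
    (rootPoly l).eval (-1) ≤
      8 * Λ * ∑ x ∈ s, |Q.eval (diskMap a x) * (rootPoly l).eval x| := by
  set η := ∑ x ∈ s, |Q.eval (diskMap a x) * (rootPoly l).eval x|
  set θ := ((1 + ρ) / 2) ^ #s
  have hη₀ : 0 ≤ η * Λ := mul_nonneg (sum_nonneg fun _ _ => abs_nonneg _) hΛ₀
  have hR : 0 < (rootPoly l).eval (-1) := eval_rootPoly_pos fun c hc => by linarith [hl c hc]
  have hθ : θ ≤ 1 := pow_le_one₀ (by positivity) (by linarith)
  have hcore : ρ ^ l.length * (rootPoly l).eval (-1) ≤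
      η * Λ + θ * (4 * M * (rootPoly l).eval (-1) + η * Λ) :=
    (pow_length_mul_eval_rootPoly_le hl hρ₀ hρ₁.le).trans
      (eval_rootPoly_le_of_small_on_nodes ha₀ ha hρ₀ hρ₁ hρ hQM hQ₀ hl hs hΛ₀ hΛ le_rfl)
  have h₁ := mul_le_mul_of_nonneg_right hρl hR.le
  have h₂ := mul_le_mul_of_nonneg_right hρs hR.le
  have h₃ := mul_le_of_le_one_left hη₀ hθ
  linarith

theorem half_le_pow (ha₀ : 0 < a) (ha : a ≤ 1 / 3) {r : ℕ} (hr : r * a ≤ 1 / 100) :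
    1 / 2 ≤ ((1 - 2 * a) / (1 - a)) ^ r := by
  have hρ : 1 + -(3 / 2 * a) ≤ (1 - 2 * a) / (1 - a) := by
    rw [le_div_iff₀ (by linarith)]
    nlinarith
  calc (1 / 2 : ℝ) ≤ 1 + r * -(3 / 2 * a) := by linarith
    _ ≤ (1 + -(3 / 2 * a)) ^ r := one_add_mul_le_pow (by linarith) r
    _ ≤ ((1 - 2 * a) / (1 - a)) ^ r := pow_le_pow_left₀ (by linarith) hρ r

theorem four_mul_mul_pow_le (ha₀ : 0 < a) (ha : a ≤ 1 / 3) {M : ℝ} {n N : ℕ} (hM : 1 ≤ M)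
    (haM : 4 * M = Real.exp (a ^ 2 * n)) (hN : 4 * (a * n) ≤ N) :
    4 * M * ((1 + (1 - 2 * a) / (1 - a)) / 2) ^ N ≤ 1 / 4 := by
  have hexp : (1 + (1 - 2 * a) / (1 - a)) / 2 ≤ Real.exp (-(a / 2)) := by
    refine le_trans ?_ (Real.one_sub_le_exp_neg _)
    have : (1 - 2 * a) / (1 - a) ≤ 1 - a := by
      rw [div_le_iff₀ (by linarith)]
      nlinarith
    linarith
  have hpos : 0 ≤ (1 - 2 * a) / (1 - a) := div_nonneg (by linarith) (by linarith)
  calc 4 * M * ((1 + (1 - 2 * a) / (1 - a)) / 2) ^ N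
      ≤ 4 * M * Real.exp (-(a / 2)) ^ N := by gcongr
    _ ≤ Real.exp (a ^ 2 * n) * Real.exp (-(2 * (a ^ 2 * n))) := by
        rw [haM, ← Real.exp_nat_mul]
        gcongr
        nlinarith
    _ = (4 * M)⁻¹ := by
        rw [haM, ← Real.exp_add, ← Real.exp_neg]
        ring_nf
    _ ≤ 1 / 4 := by
        rw [one_div]
        gcongr
        linarith

theorem exp_neg_mul_abs_eval_le (ha₀ : 0 < a) (ha : a ≤ 1 / 3) {n k : ℕ} (hk : k ≤ n) (Q : ℝ[X])
    {y : ℝ} (hy : 1 - 2 * a ≤ y) :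
    Real.exp (-(6 * (a * n))) * |Q.eval y| ≤ |(X ^ k * Q).eval y| := by
  have hexp : Real.exp (-(6 * (a * n))) ≤ y ^ k := by
    calc Real.exp (-(6 * (a * n))) ≤ (1 - 2 * a) ^ n := exp_le_one_sub_two_mul_pow ha₀.le ha n
      _ ≤ (1 - 2 * a) ^ k := pow_le_pow_of_le_one (by linarith) (by linarith) hk
      _ ≤ y ^ k := pow_le_pow_left₀ (by linarith) hy k
  rw [eval_mul, eval_pow, eval_X, abs_mul]
  gcongr
  exact hexp.trans (le_abs_self _)

theorem exp_neg_mul_eval_rootPoly_lt_sum (ha₀ : 0 < a) (ha : a ≤ 1 / 3) {M : ℝ} {n : ℕ} (hM : 1 ≤ M)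
    (haM : 4 * M = Real.exp (a ^ 2 * n)) (hX : 3 ≤ a * n) {s : Finset ℝ}
    (hcard : #s = ⌈4 * (a * n)⌉₊ + 1) (hs : (s : Set ℝ) ⊆ Set.Ioo 0 (1 / 3))
    (hΛ : ∀ x ∈ s, ∀ u ∈ closedBall (0 : ℂ) 1,
      ‖(Lagrange.basis s ofReal x).eval u‖ ≤ 108 ^ ⌈4 * (a * n)⌉₊)
    {P : ℝ[X]} (hP : P ≠ 0) (hPn : P.natDegree ≤ n) (hPM : ∀ k, |P.coeff k| ≤ M)
    (hP₁ : ∀ k, P.coeff k ≠ 0 → 1 ≤ |P.coeff k|) {l : List ℝ} (hl : ∀ c ∈ l, 0 ≤ c)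
    (hla : l.length * a ≤ 1 / 100) :
    Real.exp (-(32 * (a * n))) * (rootPoly l).eval (-1) <
      ∑ x ∈ s, |P.eval (diskMap a x) * (rootPoly l).eval x| := by
  obtain ⟨k, hk, Q, hPQ, hQ₀, hQP⟩ := exists_eq_X_pow_mul_coeff_zero_ne_zero hP
  set η := ∑ x ∈ s, |Q.eval (diskMap a x) * (rootPoly l).eval x|
  have hR : 0 < (rootPoly l).eval (-1) := eval_rootPoly_pos fun c hc => by linarith [hl c hc]
  have hη : (rootPoly l).eval (-1) ≤ 8 * 108 ^ ⌈4 * (a * n)⌉₊ * η := by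
    refine eval_rootPoly_le_mul_sum ha₀ ha (div_nonneg (by linarith) (by linarith))
      ((div_lt_one (by linarith)).2 (by linarith)) (diskMap_neg_eq_zero ha₀ ha)
      (fun i => hQP i ▸ hPM _) (hQP 0 ▸ hP₁ _ (hQP 0 ▸ hQ₀)) hl (half_le_pow ha₀ ha hla) hs
      ?_ (by positivity) hΛ
    refine four_mul_mul_pow_le ha₀ ha hM haM ?_
    rw [hcard]
    push_cast
    linarith [Nat.le_ceil (4 * (a * n))]
  have hPη : Real.exp (-(6 * (a * n))) * η ≤
      ∑ x ∈ s, |P.eval (diskMap a x) * (rootPoly l).eval x| := by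
    rw [mul_sum]
    refine sum_le_sum fun x hx => ?_
    rw [hPQ, abs_mul, abs_mul, ← mul_assoc]
    gcongr
    exact exp_neg_mul_abs_eval_le ha₀ ha (hk.trans hPn) Q (diskMap_mapsTo ha₀ ha (hs hx)).1.le
  have hη₀ : 0 < η := by
    by_contra! h
    nlinarith [show (0 : ℝ) < 8 * 108 ^ ⌈4 * (a * n)⌉₊ by positivity]
  calc Real.exp (-(32 * (a * n))) * (rootPoly l).eval (-1)
      ≤ Real.exp (-(32 * (a * n))) * (8 * 108 ^ ⌈4 * (a * n)⌉₊ * η) := by gcongr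
    _ < Real.exp (-(32 * (a * n))) * (Real.exp (26 * (a * n)) * η) := by
        gcongr
        exact eight_mul_pow_ceil_lt_exp hX
    _ = Real.exp (-(6 * (a * n))) * η := by
        rw [← mul_assoc, ← Real.exp_add]
        ring_nf
    _ ≤ _ := hPη

end

/-! ### The choice of the signs -/

theorem eval_ofFn {R : Type*} [CommSemiring R] [DecidableEq R] {n : ℕ} (v : Fin n → R) (x : R) :
    (ofFn n v).eval x = ∑ j, v j * x ^ (j : ℕ) := by
  simp [ofFn_eq_sum_monomial, eval_finsetSum]

theorem coeff_ofFn_eq_zero_or {R : Type*} [Semiring R] [DecidableEq R] {n : ℕ} (v : Fin n → R)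
    (k : ℕ) : (ofFn n v).coeff k = 0 ∨ ∃ j, (ofFn n v).coeff k = v j := by
  rcases lt_or_ge k n with hk | hk
  · exact .inr ⟨⟨k, hk⟩, ofFn_coeff_eq_val_of_lt v hk⟩
  · exact .inl (ofFn_coeff_eq_zero_of_ge v hk)

theorem one_le_sq_mul_of_exp {a M : ℝ} {n : ℕ} (hM : 1 ≤ M) (haM : 4 * M = Real.exp (a ^ 2 * n)) :
    1 ≤ a ^ 2 * n := by
  rw [← Real.exp_le_exp, ← haM]
  linarith [Real.exp_one_lt_three]

theorem add_one_mul_ceil_add_one_mul_le_exp {X M : ℝ} (hX : 3 ≤ X) {n : ℕ} (hn : n ≤ X ^ 2)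
    (hM : 0 ≤ M) (hMX : M ≤ Real.exp X) : (n + 1) * (⌈4 * X⌉₊ + 1) * M ≤ Real.exp (5 * X) := by
  have hexp : X + 1 ≤ Real.exp X := Real.add_one_le_exp X
  have hn' : (n + 1 : ℝ) ≤ Real.exp X ^ 2 := by nlinarith
  have hN : (⌈4 * X⌉₊ + 1 : ℝ) ≤ Real.exp X ^ 2 := by
    nlinarith [ceil_four_mul_le (X := X) (by linarith)]
  calc (n + 1) * (⌈4 * X⌉₊ + 1) * M ≤ Real.exp X ^ 2 * Real.exp X ^ 2 * Real.exp X := by gcongr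
    _ = Real.exp (5 * X) := by
      rw [← Real.exp_nat_mul, ← Real.exp_add, ← Real.exp_add]
      ring_nf

theorem floor_add_one_pow_lt_two_pow {a : ℝ} {n q : ℕ} (hX : 1 ≤ a * n) (hq : q * a ≤ 1 / 100) :
    (⌊Real.exp (5 * (a * n)) / Real.exp (-(32 * (a * n)))⌋₊ + 1) ^ q < 2 ^ (n + 1) := by
  have hbase : (⌊Real.exp (5 * (a * n)) / Real.exp (-(32 * (a * n)))⌋₊ + 1 : ℝ) ≤
      Real.exp (38 * (a * n)) := by
    have hfloor := Nat.floor_le (Real.exp_pos (37 * (a * n))).le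
    have hexp : Real.exp (38 * (a * n)) = Real.exp (a * n) * Real.exp (37 * (a * n)) := by
      rw [← Real.exp_add]
      ring_nf
    rw [← Real.exp_sub, show 5 * (a * n) - -(32 * (a * n)) = 37 * (a * n) by ring]
    nlinarith [Real.add_one_le_exp (a * n), Real.add_one_le_exp (37 * (a * n))]
  have hpow : (⌊Real.exp (5 * (a * n)) / Real.exp (-(32 * (a * n)))⌋₊ + 1 : ℝ) ^ q <
      2 ^ (n + 1) := by
    calc (⌊Real.exp (5 * (a * n)) / Real.exp (-(32 * (a * n)))⌋₊ + 1 : ℝ) ^ q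
        ≤ Real.exp (38 * (a * n)) ^ q := by gcongr
      _ = Real.exp (38 * n * (q * a)) := by
          rw [← Real.exp_nat_mul]
          ring_nf
      _ ≤ Real.exp (n * Real.log 2) := by
          rw [Real.exp_le_exp]
          nlinarith [Real.log_two_gt_d9, n.cast_nonneg (α := ℝ)]
      _ = 2 ^ n := by rw [Real.exp_nat_mul, Real.exp_log two_pos]
      _ < 2 ^ (n + 1) := pow_lt_pow_right₀ one_lt_two n.lt_succ_self
  exact_mod_cast hpow

theorem mul_pow_mul_pow_mem_Icc {c M x y : ℝ} (hc : c ∈ Set.Icc 0 M) (hx : x ∈ Set.Icc 0 1)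
    (hy : y ∈ Set.Icc 0 1) (j k : ℕ) : c * x ^ j * y ^ k ∈ Set.Icc 0 M := by
  have hcx : 0 ≤ c * x ^ j := mul_nonneg hc.1 (pow_nonneg hx.1 j)
  refine ⟨mul_nonneg hcx (pow_nonneg hy.1 k), ?_⟩
  calc c * x ^ j * y ^ k ≤ c * x ^ j := mul_le_of_le_one_right hcx (pow_le_one₀ hy.1 hy.2)
    _ ≤ c := mul_le_of_le_one_right hc.1 (pow_le_one₀ hx.1 hx.2)
    _ ≤ M := hc.2

section

variable {n : ℕ} {M : ℝ} {A b : Fin (n + 1) → ℝ}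

theorem ofFn_signed_ne_zero (hA : ∀ j, A j ∈ Set.Icc 1 M) (hb₀ : b ≠ 0) :
    (ofFn (n + 1) fun j => b j * A j) ≠ 0 := by
  obtain ⟨j, hj⟩ := Function.ne_iff.1 hb₀
  rw [Ne, ← map_zero (ofFn (n + 1)), (injective_ofFn _).eq_iff]
  exact fun h => mul_ne_zero hj (zero_lt_one.trans_le (hA j).1).ne' (congrFun h j)

theorem abs_coeff_ofFn_signed_le (hA : ∀ j, A j ∈ Set.Icc 1 M) (hM : 0 ≤ M)
    (hb : ∀ j, b j = -1 ∨ b j = 0 ∨ b j = 1) (k : ℕ) :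
    |(ofFn (n + 1) fun j => b j * A j).coeff k| ≤ M := by
  rcases coeff_ofFn_eq_zero_or (fun j => b j * A j) k with h | ⟨j, h⟩
  · simpa [h] using hM
  · have hAj : |A j| ≤ M := by rw [abs_of_nonneg] <;> linarith [(hA j).1, (hA j).2]
    rcases hb j with hj | hj | hj <;> simpa [h, hj]

theorem one_le_abs_coeff_ofFn_signed (hA : ∀ j, A j ∈ Set.Icc 1 M)
    (hb : ∀ j, b j = -1 ∨ b j = 0 ∨ b j = 1) (k : ℕ)
    (hk : (ofFn (n + 1) fun j => b j * A j).coeff k ≠ 0) :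
    1 ≤ |(ofFn (n + 1) fun j => b j * A j).coeff k| := by
  obtain ⟨j, h⟩ := (coeff_ofFn_eq_zero_or (fun j => b j * A j) k).resolve_left hk
  have hAj : 1 ≤ |A j| := (hA j).1.trans (le_abs_self _)
  rcases hb j with hj | hj | hj <;> simp_all

end

section

variable {a : ℝ} {n : ℕ} {M : ℝ} {A : Fin (n + 1) → ℝ}

theorem exists_moments_le (ha₀ : 0 < a) (ha : a ≤ 1 / 3) (hM : 1 ≤ M)
    (haM : 4 * M = Real.exp (a ^ 2 * n)) (hA : ∀ j, A j ∈ Set.Icc 1 M) {s : Finset ℝ}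
    (hcard : #s = ⌈4 * (a * n)⌉₊ + 1) (hs : (s : Set ℝ) ⊆ Set.Ioo 0 (1 / 3))
    {q : ℕ} (hq : q * a ≤ 1 / 100) :
    ∃ b : Fin (n + 1) → ℝ, b ≠ 0 ∧ (∀ j, b j = -1 ∨ b j = 0 ∨ b j = 1) ∧ ∀ k < q,
      |∑ x ∈ s, (ofFn (n + 1) fun j => b j * A j).eval (diskMap a x) * x ^ k| ≤
        Real.exp (-(32 * (a * n))) := by
  have hsq := one_le_sq_mul_of_exp hM haM
  have hX : 3 ≤ a * n := by nlinarith
  have hterm : ∀ (k : ℕ) (j : Fin (n + 1)), ∀ x ∈ s,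
      A j * diskMap a x ^ (j : ℕ) * x ^ k ∈ Set.Icc 0 M := fun k j x hx => by
    have hφ := diskMap_mapsTo ha₀ ha (hs hx)
    exact mul_pow_mul_pow_mem_Icc ⟨by linarith [(hA j).1], (hA j).2⟩
      ⟨by linarith [hφ.1], by linarith [hφ.2]⟩ ⟨(hs hx).1.le, by linarith [(hs hx).2]⟩ _ _
  have hsum : ∀ k : Fin q, ∑ j : Fin (n + 1), ∑ x ∈ s, A j * diskMap a x ^ (j : ℕ) * x ^ (k : ℕ) ≤
      Real.exp (5 * (a * n)) := fun k => by
    calc ∑ j : Fin (n + 1), ∑ x ∈ s, A j * diskMap a x ^ (j : ℕ) * x ^ (k : ℕ)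
        ≤ ∑ _j : Fin (n + 1), ∑ _x ∈ s, M :=
          sum_le_sum fun j _ => sum_le_sum fun x hx => (hterm k j x hx).2
      _ = (n + 1) * (⌈4 * (a * n)⌉₊ + 1) * M := by simp [hcard, mul_assoc]
      _ ≤ Real.exp (5 * (a * n)) := by
          refine add_one_mul_ceil_add_one_mul_le_exp hX (by nlinarith) (by linarith) ?_
          have : Real.exp (a ^ 2 * n) ≤ Real.exp (a * n) := Real.exp_le_exp.2 (by nlinarith)
          linarith
  obtain ⟨b, hb₀, hb, hmom⟩ := exists_signed_sum_small (Real.exp_pos (-(32 * (a * n))))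
    (fun (k : Fin q) j => sum_nonneg fun x hx => (hterm k j x hx).1) hsum
    (by simpa only [Fintype.card_fin] using
      floor_add_one_pow_lt_two_pow (by linarith) hq)
  refine ⟨b, hb₀, hb, fun k hk => ?_⟩
  convert hmom ⟨k, hk⟩ using 2
  simp only [eval_ofFn, sum_mul, mul_sum]
  rw [sum_comm]
  simp only [mul_assoc]

theorem exists_hasSignChanges (ha₀ : 0 < a) (ha : a ≤ 1 / 3) (hM : 1 ≤ M)
    (haM : 4 * M = Real.exp (a ^ 2 * n)) (hA : ∀ j, A j ∈ Set.Icc 1 M) :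
    ∃ b : Fin (n + 1) → ℝ, (∀ j, b j = -1 ∨ b j = 0 ∨ b j = 1) ∧ ∃ q : ℕ, 1 / 100 / a - 1 ≤ q ∧
      HasSignChanges (fun x => ∑ j, b j * A j * x ^ (j : ℕ)) (Set.Ioo (1 - 2 * a) (1 - a)) q := by
  have hX : 3 ≤ a * n := by nlinarith [one_le_sq_mul_of_exp hM haM]
  have hq : ⌊1 / 100 / a⌋₊ * a ≤ 1 / 100 :=
    (le_div_iff₀ ha₀).1 (Nat.floor_le (by positivity))
  obtain ⟨s, hcard, hs, hΛ⟩ := exists_finset_norm_eval_basis_le ⌈4 * (a * n)⌉₊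
  obtain ⟨b, hb₀, hb, hmom⟩ := exists_moments_le ha₀ ha hM haM hA hcard hs hq
  set P := ofFn (n + 1) fun j => b j * A j with hP
  have hlarge : ∀ l : List ℝ, (∀ c ∈ l, 0 ≤ c) → l.length * a ≤ 1 / 100 →
      Real.exp (-(32 * (a * n))) * (rootPoly l).eval (-1) <
        ∑ x ∈ s, |P.eval (diskMap a x) * (rootPoly l).eval x| := fun l hl hla =>
    exp_neg_mul_eval_rootPoly_lt_sum ha₀ ha hM haM hX hcard hs hΛ (ofFn_signed_ne_zero hA hb₀)
      (Nat.le_of_lt_succ (ofFn_natDegree_lt le_add_self _))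
      (abs_coeff_ofFn_signed_le hA (zero_le_one.trans hM) hb)
      (one_le_abs_coeff_ofFn_signed hA hb) hl hla
  have hne : ∃ x ∈ s, P.eval (diskMap a x) ≠ 0 := by
    by_contra! hzero
    have := hlarge [] (by simp) (by simp)
    rw [sum_eq_zero fun x hx => by rw [hzero x hx, zero_mul, abs_zero]] at this
    simp [(Real.exp_pos _).not_gt] at this
  obtain ⟨x₀, l, h⟩ := exists_isSignChain hne
  have hl : ∀ c ∈ l, 0 ≤ c := fun c hc => (hs (h.mem c (.tail _ hc))).1.le
  have hlength : ⌊1 / 100 / a⌋₊ ≤ l.length := by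
    by_contra! hlt
    refine (hlarge l hl (le_trans ?_ hq)).not_ge (h.sum_abs_mul_rootPoly_le hmom hl hlt)
    gcongr
  refine ⟨b, hb, l.length, ?_, ?_⟩
  · have : (⌊1 / 100 / a⌋₊ : ℝ) ≤ l.length := by exact_mod_cast hlength
    linarith [Nat.lt_floor_add_one (1 / 100 / a)]
  · have hchain := hasSignChanges_of_isChain h.isChain fun y hy => hs (h.mem y hy)
    simp only [hP, eval_ofFn] at hchain
    exact .of_comp hchain ((diskMap_strictMonoOn ha₀ ha).mono fun _ hx => hx.1.le)
      (diskMap_mapsTo ha₀ ha)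

end

end BlochPolya

/-- Extension of the Bloch–Pólya theorem: for coefficients `a_j ∈ [1,M]` one can choose
signs `b_j ∈ {-1,0,1}` so that `P(x) = ∑ b_j a_j x^j` has at least
`c (n / log 4M)^(1/2) - 1` distinct sign changes in `(1-2a, 1-a)`,
where `a = (log 4M / n)^(1/2)`. -/
theorem bloch_polya_extension :
    ∃ c : ℝ, 0 < c ∧
      ∀ n : ℕ, 1 ≤ n →
        ∀ M : ℝ, 1 ≤ M → M ≤ (1 / 4) * Real.exp ((n : ℝ) / 9) →
          ∀ A : Fin (n + 1) → ℝ, (∀ j, A j ∈ Set.Icc (1 : ℝ) M) →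
            ∃ b : Fin (n + 1) → ℝ, (∀ j, b j = -1 ∨ b j = 0 ∨ b j = 1) ∧
              ∃ q : ℕ, c * Real.sqrt ((n : ℝ) / Real.log (4 * M)) - 1 ≤ (q : ℝ) ∧
                ∃ t : Fin (q + 1) → ℝ, StrictMono t ∧
                  (∀ i, t i ∈ Set.Ioo
                      (1 - 2 * Real.sqrt (Real.log (4 * M) / (n : ℝ)))
                      (1 - Real.sqrt (Real.log (4 * M) / (n : ℝ)))) ∧
                  ∀ i : Fin q,
                    (∑ j : Fin (n + 1), b j * A j * (t i.castSucc) ^ (j : ℕ)) *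
                      (∑ j : Fin (n + 1), b j * A j * (t i.succ) ^ (j : ℕ)) < 0 := by
  refine ⟨1 / 100, by norm_num, fun n hn M hM hMn A hA => ?_⟩
  set a := Real.sqrt (Real.log (4 * M) / n) with ha
  have hn' : (0 : ℝ) < n := by exact_mod_cast hn
  have hlog : 0 < Real.log (4 * M) / n := div_pos (Real.log_pos (by linarith)) hn'
  have ha_le : a ≤ 1 / 3 := by
    rw [ha, Real.sqrt_le_left (by norm_num), div_le_iff₀ hn', Real.log_le_iff_le_exp (by linarith),
      show (1 / 3 : ℝ) ^ 2 * n = n / 9 by ring]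
    linarith
  have haM : 4 * M = Real.exp (a ^ 2 * n) := by
    rw [ha, Real.sq_sqrt hlog.le, div_mul_cancel₀ _ hn'.ne', Real.exp_log (by linarith)]
  rw [← inv_div (Real.log (4 * M)), Real.sqrt_inv, ← div_eq_mul_inv]
  exact BlochPolya.exists_hasSignChanges (Real.sqrt_pos.2 hlog) ha_le hM haM hA
end

section
/- Let a ∈ (0, 1/3] and I_a := (1−2a, 1−a). Let n ≥ 0 be an integer, M ≥ 1, and let P be a polynomial of the form P(x) = Σ_{j=0}^{n} b_j a_j x^j with a_j ∈ [1, M], b_j ∈ {−1, 0, 1} for all j, and b_0 ∈ {−1, 1}. Then ∫_{I_a} log^−|P(x)| dx ≤ (9π/√2)·log(4M), where log^− y := max{0, −log y}. -/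
/-!
If `G` is holomorphic with `|G| ≤ 1` on a simply connected domain `Ω`, then Jensen's formula on the
circles of radius `r → 1` in the disc uniformising `Ω`, with Fatou's lemma, gives
`∫ -log |G| dω ≤ -log |G z₀|`, where `ω` is the harmonic measure of `Ω` seen from `z₀`. We take
`z₀ = 1`, a `G` holomorphic on the whole right half-plane, and for `Ω` this half-plane slit along
`(0, ρ]`: the slit is boundary of `Ω` although it lies inside the domain of `G`, and its harmonic
measure has an explicit density.

A Möbius map carries the half-plane to the disc with diameter `(-1/2, 1)`, the point `1` to `0`, and
part of the slit to `I_a`. As this disc is tangent to the unit circle at `1`, it satisfies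
`|1 - w|² ≤ 6 (1 - |w|)`, so `P w (1 - w)² / (6 M)` is bounded by `1` on it whenever
`|P w| (1 - |w|) ≤ M`, which holds for power sums with coefficients at most `M`.
-/

open Complex Filter MeasureTheory Metric Real Set Topology

section Jensen

lemma log_norm_le_circleAverage_log_norm {g : ℂ → ℂ} {c : ℂ} {R : ℝ} (hR : 0 < R)
    (hg : AnalyticOnNhd ℂ g (closedBall c R)) (hgc : g c ≠ 0) :
    Real.log ‖g c‖ ≤ circleAverage (fun z ↦ Real.log ‖g z‖) c R := by
  rw [← abs_of_pos hR] at hg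
  rw [hg.circleAverage_log_norm hR.ne' hgc, le_add_iff_nonneg_left]
  refine finsum_nonneg fun u ↦ ?_
  by_cases hu : u ∈ closedBall c |R|
  · refine mul_nonneg (Int.cast_nonneg (MeromorphicOn.AnalyticOnNhd.divisor_nonneg hg u)) ?_
    rcases eq_or_ne u c with rfl | huc
    · simp
    · rw [← div_eq_mul_inv]
      refine Real.log_nonneg ((one_le_div (norm_pos_iff.mpr (sub_ne_zero.mpr huc.symm))).mpr ?_)
      rwa [mem_closedBall', abs_of_pos hR, dist_eq_norm] at hu
  · rw [Function.locallyFinsuppWithin.apply_eq_zero_of_notMem _ hu, Int.cast_zero, zero_mul]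

lemma lintegral_neg_log_norm_circleMap_le {g : ℂ → ℂ} {c : ℂ} {R : ℝ} (hR : 0 < R)
    (hg : AnalyticOnNhd ℂ g (closedBall c R)) (hgc : g c ≠ 0)
    (hg1 : ∀ z ∈ sphere c R, ‖g z‖ ≤ 1) :
    ∫⁻ t in Ioc 0 (2 * π), ENNReal.ofReal (-Real.log ‖g (circleMap c R t)‖) ≤
      ENNReal.ofReal (2 * π * -Real.log ‖g c‖) := by
  have hint : CircleIntegrable (fun z ↦ Real.log ‖g z‖) c R :=
    MeromorphicOn.circleIntegrable_log_norm <| AnalyticOnNhd.meromorphicOn <|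
      hg.mono (by rw [abs_of_pos hR]; exact sphere_subset_closedBall)
  have hmean := log_norm_le_circleAverage_log_norm hR hg hgc
  rw [circleAverage_def, smul_eq_mul, inv_mul_eq_div, le_div_iff₀ two_pi_pos] at hmean
  have hle := two_pi_pos.le
  rw [← ofReal_integral_eq_lintegral_ofReal]
  · rw [← intervalIntegral.integral_of_le hle, intervalIntegral.integral_neg]
    exact ENNReal.ofReal_le_ofReal (by linarith)
  · exact ((intervalIntegrable_iff_integrableOn_Ioc_of_le hle).mp hint).neg
  · exact Eventually.of_forall fun t ↦ neg_nonneg.mpr <|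
      Real.log_nonpos (norm_nonneg _) (hg1 _ (circleMap_mem_sphere c hR.le t))

lemma ofReal_neg_log_norm_le_liminf {ι E : Type*} [NormedAddCommGroup E] {l : Filter ι} [l.NeBot]
    {u : ι → E} {w : E} (hu : Tendsto u l (𝓝 w)) :
    ENNReal.ofReal (-Real.log ‖w‖) ≤ liminf (fun i ↦ ENNReal.ofReal (-Real.log ‖u i‖)) l := by
  rcases eq_or_ne w 0 with rfl | hw
  · simp
  · exact (ENNReal.tendsto_ofReal (hu.norm.log (norm_ne_zero_iff.mpr hw)).neg).liminf_eq.ge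

lemma circleMap_mem_ball {c : ℂ} {r R : ℝ} (hr : r ∈ Ioo 0 R) (t : ℝ) :
    circleMap c r t ∈ ball c R := by
  rw [mem_ball, dist_eq_norm, circleMap_sub_center, norm_circleMap_zero, abs_of_pos hr.1]
  exact hr.2

lemma setLIntegral_neg_log_norm_circleMap_le {g : ℂ → ℂ} {c : ℂ} {R : ℝ} (hR : 0 < R)
    (hg : DifferentiableOn ℂ g (ball c R)) (hgc : g c ≠ 0) (hg1 : ∀ z ∈ ball c R, ‖g z‖ ≤ 1)
    {S : Set ℝ} (hSm : MeasurableSet S) (hS : S ⊆ Ioc 0 (2 * π))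
    (hcont : ∀ t ∈ S, ContinuousWithinAt g (ball c R) (circleMap c R t)) :
    ∫⁻ t in S, ENNReal.ofReal (-Real.log ‖g (circleMap c R t)‖) ≤
      ENNReal.ofReal (2 * π * -Real.log ‖g c‖) := by
  obtain ⟨r, -, hr, hr_tendsto⟩ := exists_seq_strictMono_tendsto' hR
  let F : ℕ → ℝ → ENNReal := fun n t ↦ ENNReal.ofReal (-Real.log ‖g (circleMap c (r n) t)‖)
  have hF_meas (n : ℕ) : Measurable (F n) := by
    have : Continuous fun t ↦ g (circleMap c (r n) t) :=
      hg.continuousOn.comp_continuous (continuous_circleMap c (r n)) (circleMap_mem_ball (hr n))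
    exact (Real.measurable_log.comp this.norm.measurable).neg.ennreal_ofReal
  have hF_int (n : ℕ) :
      ∫⁻ t in Ioc 0 (2 * π), F n t ≤ ENNReal.ofReal (2 * π * -Real.log ‖g c‖) := by
    have hball : closedBall c (r n) ⊆ ball c R := closedBall_subset_ball (hr n).2
    exact lintegral_neg_log_norm_circleMap_le (hr n).1
      ((hg.analyticOnNhd isOpen_ball).mono hball) hgc
      fun z hz ↦ hg1 z (hball (sphere_subset_closedBall hz))
  have hlim (t : ℝ) (ht : t ∈ S) :
      Tendsto (fun n ↦ g (circleMap c (r n) t)) atTop (𝓝 (g (circleMap c R t))) := by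
    have hradial : Tendsto (fun n ↦ circleMap c (r n) t) atTop (𝓝 (circleMap c R t)) := by
      have : Continuous fun s : ℝ ↦ circleMap c s t := by unfold circleMap; fun_prop
      exact (this.tendsto R).comp hr_tendsto
    exact (hcont t ht).tendsto.comp <| tendsto_nhdsWithin_iff.mpr
      ⟨hradial, Eventually.of_forall fun n ↦ circleMap_mem_ball (hr n) t⟩
  calc ∫⁻ t in S, ENNReal.ofReal (-Real.log ‖g (circleMap c R t)‖)
    _ ≤ ∫⁻ t in S, liminf (fun n ↦ F n t) atTop :=
        setLIntegral_mono' hSm fun t ht ↦ ofReal_neg_log_norm_le_liminf (hlim t ht)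
    _ ≤ ∫⁻ t in Ioc 0 (2 * π), liminf (fun n ↦ F n t) atTop := lintegral_mono_set hS
    _ ≤ liminf (fun n ↦ ∫⁻ t in Ioc 0 (2 * π), F n t) atTop := lintegral_liminf_le hF_meas
    _ ≤ ENNReal.ofReal (2 * π * -Real.log ‖g c‖) :=
        liminf_le_of_le (by isBoundedDefault) fun b hb ↦ (hb.exists.choose_spec).trans (hF_int _)

end Jensen

section SlitMap

lemma sq_mem_slitPlane_of_re_pos {m : ℂ} (hm : 0 < m.re) : m ^ 2 ∈ slitPlane := by
  rw [mem_slitPlane_iff, sq, mul_re, mul_im]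
  rcases eq_or_ne m.im 0 with him | him
  · left; rw [him]; nlinarith
  · right
    rw [mul_comm m.im, ← two_mul]
    simp [hm.ne', him]

lemma re_sqrt_pos {u : ℂ} (hu : u ∈ slitPlane) : 0 < u.sqrt.re := by
  rw [Complex.sqrt, cpow_inv_two_re, Real.sqrt_pos]
  rcases hu with h | h
  · positivity
  · linarith [neg_abs_le u.re, abs_re_lt_norm.mpr h]

lemma sqrt_ofReal_sq {s : ℝ} (hs : 0 < s) : ((s : ℂ) ^ 2).sqrt = s :=
  sq_cpow_two_inv (by simpa)

lemma re_one_sub_div_one_add_pos {z : ℂ} (hz : ‖z‖ < 1) : 0 < ((1 - z) / (1 + z)).re := by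
  have hne : 1 + z ≠ 0 := slitPlane_ne_zero (mem_slitPlane_of_norm_lt_one hz)
  have hnormSq : normSq z < 1 := by
    rw [← Complex.sq_norm]; exact pow_lt_one₀ (norm_nonneg z) hz two_ne_zero
  rw [Complex.div_re, ← add_div]
  refine div_pos ?_ (normSq_pos.mpr hne)
  rw [normSq_apply] at hnormSq
  simp only [sub_re, add_re, one_re, sub_im, add_im, one_im]
  linarith

/-- The square of `slitMap`: the Koebe function `z / (1 + z) ^ 2`, scaled so that it maps the unit
disc conformally onto `ℂ` slit along `(-∞, ρ ^ 2]`, with `0 ↦ 1`. -/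
noncomputable def slitMapSq (ρ : ℝ) (z : ℂ) : ℂ := 1 - (1 - ρ ^ 2) * (4 * z / (1 + z) ^ 2)

/-- The conformal map of the unit disc onto the right half-plane slit along `(0, ρ]`, with
`0 ↦ 1`. It extends continuously to an arc of the unit circle, which covers both sides of the
slit. -/
noncomputable def slitMap (ρ : ℝ) (z : ℂ) : ℂ := (slitMapSq ρ z).sqrt

lemma slitMap_zero (ρ : ℝ) : slitMap ρ 0 = 1 := by simp [slitMap, slitMapSq]

lemma slitMapSq_mem_slitPlane {ρ : ℝ} (hρ : ρ ^ 2 ≤ 1) {z : ℂ} (hz : ‖z‖ < 1) :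
    slitMapSq ρ z ∈ slitPlane := by
  have hne : 1 + z ≠ 0 := slitPlane_ne_zero (mem_slitPlane_of_norm_lt_one hz)
  have hsegment : slitMapSq ρ z =
      ρ ^ 2 • (1 : ℂ) + (1 - ρ ^ 2) • ((1 - z) / (1 + z)) ^ 2 := by
    simp only [slitMapSq, real_smul]
    push_cast
    field_simp
    ring
  rw [hsegment]
  exact starConvex_one_slitPlane (sq_mem_slitPlane_of_re_pos (re_one_sub_div_one_add_pos hz))
    (sq_nonneg ρ) (sub_nonneg.mpr hρ) (by ring)

lemma differentiableAt_slitMap {ρ : ℝ} {z : ℂ} (hz : 1 + z ≠ 0)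
    (hsq : slitMapSq ρ z ∈ slitPlane) : DifferentiableAt ℂ (slitMap ρ) z := by
  have : DifferentiableAt ℂ (slitMapSq ρ) z := by
    unfold slitMapSq
    fun_prop (disch := exact pow_ne_zero 2 hz)
  exact this.cpow_const hsq

/-- The argument in `(0, π)` of the boundary point of the unit disc that `slitMap ρ` maps to the
point `s` of the slit; its complex conjugate is mapped to the other side of the slit at `s`. -/
noncomputable def slitAngle (ρ s : ℝ) : ℝ := arccos (2 * (1 - ρ ^ 2) / (1 - s ^ 2) - 1)

/-- The density at `s`, with respect to `ds / π`, of the harmonic measure from `1` of the two sides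
of the slit `(0, ρ]` in the right half-plane. -/
noncomputable def slitDensity (ρ s : ℝ) : ℝ :=
  2 * s * √(1 - ρ ^ 2) / ((1 - s ^ 2) * √(ρ ^ 2 - s ^ 2))

variable {ρ s : ℝ}

lemma slitAngle_arg_mem_Ioo (hρ : ρ < 1) (hs : s ∈ Ioo 0 ρ) :
    2 * (1 - ρ ^ 2) / (1 - s ^ 2) - 1 ∈ Ioo (-1) 1 := by
  obtain ⟨hs0, hsρ⟩ := hs
  have hc : 0 < 1 - ρ ^ 2 := by nlinarith
  have hsc : 1 - ρ ^ 2 < 1 - s ^ 2 := by nlinarith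
  have hd : 0 < 1 - s ^ 2 := hc.trans hsc
  constructor
  · have : 0 < 2 * (1 - ρ ^ 2) / (1 - s ^ 2) := by positivity
    linarith
  · rw [sub_lt_iff_lt_add, div_lt_iff₀ hd]; linarith

lemma cos_slitAngle (hρ : ρ < 1) (hs : s ∈ Ioo 0 ρ) :
    Real.cos (slitAngle ρ s) = 2 * (1 - ρ ^ 2) / (1 - s ^ 2) - 1 :=
  Real.cos_arccos (slitAngle_arg_mem_Ioo hρ hs).1.le (slitAngle_arg_mem_Ioo hρ hs).2.le

lemma slitAngle_mem_Ioo (hρ : ρ < 1) (hs : s ∈ Ioo 0 ρ) : slitAngle ρ s ∈ Ioo 0 π := by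
  obtain ⟨hlb, hub⟩ := slitAngle_arg_mem_Ioo hρ hs
  refine ⟨arccos_pos.mpr hub, ?_⟩
  rw [← arccos_neg_one]
  exact arccos_lt_arccos le_rfl hlb hub.le

lemma hasDerivAt_slitAngle (hρ : ρ < 1) (hs : s ∈ Ioo 0 ρ) :
    HasDerivAt (slitAngle ρ) (-slitDensity ρ s) s := by
  obtain ⟨hlb, hub⟩ := slitAngle_arg_mem_Ioo hρ hs
  have hc : 0 < 1 - ρ ^ 2 := by nlinarith [hs.1, hs.2]
  have hsρ : 0 < ρ ^ 2 - s ^ 2 := by nlinarith [hs.1, hs.2]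
  have hd : 0 < 1 - s ^ 2 := by linarith
  have harg : HasDerivAt (fun s ↦ 2 * (1 - ρ ^ 2) / (1 - s ^ 2) - 1)
      (4 * (1 - ρ ^ 2) * s / (1 - s ^ 2) ^ 2) s := by
    refine (((hasDerivAt_const s _).fun_div ((hasDerivAt_pow 2 s).const_sub 1) hd.ne').sub_const
      1).congr_deriv ?_
    push_cast
    ring
  have hsqrt : √(1 - (2 * (1 - ρ ^ 2) / (1 - s ^ 2) - 1) ^ 2) =
      2 * √(1 - ρ ^ 2) * √(ρ ^ 2 - s ^ 2) / (1 - s ^ 2) := by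
    rw [Real.sqrt_eq_iff_mul_self_eq_of_pos (by positivity)]
    field_simp
    rw [Real.sq_sqrt hc.le, Real.sq_sqrt hsρ.le]
    ring
  refine ((hasDerivAt_arccos hlb.ne' hub.ne).comp s harg).congr_deriv ?_
  rw [hsqrt, slitDensity]
  have hc' : √(1 - ρ ^ 2) ^ 2 = 1 - ρ ^ 2 := Real.sq_sqrt hc.le
  have hsc : √(1 - ρ ^ 2) ≠ 0 := (Real.sqrt_pos.mpr hc).ne'
  have hsr : √(ρ ^ 2 - s ^ 2) ≠ 0 := (Real.sqrt_pos.mpr hsρ).ne'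
  field_simp
  rw [hc']
  ring

lemma one_add_circleMap_ne_zero {t : ℝ} (ht : Real.cos t ≠ -1) : 1 + circleMap 0 1 t ≠ 0 := by
  intro h
  apply ht
  have := congrArg Complex.re h
  simp [circleMap, exp_ofReal_mul_I_re] at this
  linarith

lemma slitMapSq_circleMap {t : ℝ} (ht : Real.cos t ≠ -1) :
    slitMapSq ρ (circleMap 0 1 t) = 1 - 2 * (1 - ρ ^ 2) / (1 + Real.cos t) := by
  have hne : (1 + Real.cos t : ℂ) ≠ 0 := by
    norm_cast; exact fun h ↦ ht (by linarith)
  have hsq : (1 + circleMap 0 1 t) ^ 2 = 2 * (1 + Real.cos t) * circleMap 0 1 t := by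
    have := Complex.sin_sq_add_cos_sq t
    rw [circleMap_zero, exp_mul_I]
    push_cast
    linear_combination Complex.sin t ^ 2 * I_sq - this
  have hz : circleMap 0 1 t ≠ 0 := circleMap_ne_center one_ne_zero
  rw [slitMapSq, hsq]
  push_cast at hne ⊢
  field_simp
  ring

lemma cos_slitAngle_ne_neg_one (hρ : ρ < 1) (hs : s ∈ Ioo 0 ρ) :
    Real.cos (slitAngle ρ s) ≠ -1 :=
  cos_slitAngle hρ hs ▸ (slitAngle_arg_mem_Ioo hρ hs).1.ne'

lemma slitMapSq_circleMap_of_cos_eq (hρ : ρ < 1) (hs : s ∈ Ioo 0 ρ) {t : ℝ}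
    (ht : Real.cos t = Real.cos (slitAngle ρ s)) : slitMapSq ρ (circleMap 0 1 t) = s ^ 2 := by
  have hc : 0 < 1 - ρ ^ 2 := by nlinarith [hs.1, hs.2]
  have hd : 0 < 1 - s ^ 2 := by nlinarith [hs.1, hs.2]
  rw [slitMapSq_circleMap (ht ▸ cos_slitAngle_ne_neg_one hρ hs), ht, cos_slitAngle hρ hs]
  norm_cast
  field_simp
  ring

lemma slitMap_circleMap_of_cos_eq (hρ : ρ < 1) (hs : s ∈ Ioo 0 ρ) {t : ℝ}
    (ht : Real.cos t = Real.cos (slitAngle ρ s)) : slitMap ρ (circleMap 0 1 t) = s := by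
  rw [slitMap, slitMapSq_circleMap_of_cos_eq hρ hs ht, sqrt_ofReal_sq hs.1]

lemma continuousAt_slitMap_circleMap_of_cos_eq (hρ : ρ < 1) (hs : s ∈ Ioo 0 ρ) {t : ℝ}
    (ht : Real.cos t = Real.cos (slitAngle ρ s)) :
    ContinuousAt (slitMap ρ) (circleMap 0 1 t) := by
  have hne := one_add_circleMap_ne_zero (ht ▸ cos_slitAngle_ne_neg_one hρ hs)
  refine (differentiableAt_slitMap hne ?_).continuousAt
  rw [slitMapSq_circleMap_of_cos_eq hρ hs ht]
  exact sq_mem_slitPlane_of_re_pos (by simpa using hs.1)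

lemma injOn_of_cos_eq_cos_slitAngle (hρ : ρ < 1) {f : ℝ → ℝ}
    (hcos : ∀ s ∈ Ioo 0 ρ, Real.cos (f s) = Real.cos (slitAngle ρ s)) : InjOn f (Ioo 0 ρ) := by
  intro s hs s' hs' h
  rw [← ofReal_inj, ← slitMap_circleMap_of_cos_eq hρ hs (hcos s hs), h,
    slitMap_circleMap_of_cos_eq hρ hs' (hcos s' hs')]

lemma measurableSet_image_of_cos_eq_cos_slitAngle (hρ : ρ < 1) {f : ℝ → ℝ}
    (hf : ContinuousOn f (Ioo 0 ρ))
    (hcos : ∀ s ∈ Ioo 0 ρ, Real.cos (f s) = Real.cos (slitAngle ρ s)) :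
    MeasurableSet (f '' Ioo 0 ρ) :=
  measurableSet_Ioo.image_of_continuousOn_injOn hf (injOn_of_cos_eq_cos_slitAngle hρ hcos)

lemma slitDensity_nonneg (hρ : ρ < 1) (hs : s ∈ Ioo 0 ρ) : 0 ≤ slitDensity ρ s := by
  have hs0 := hs.1
  have : 0 ≤ 1 - s ^ 2 := by nlinarith [hs.2]
  unfold slitDensity
  positivity

lemma setLIntegral_image_slitMap_circleMap (hρ : ρ < 1) {f f' : ℝ → ℝ}
    (hf : ∀ s ∈ Ioo 0 ρ, HasDerivAt f (f' s) s)
    (hf' : ∀ s ∈ Ioo 0 ρ, |f' s| = slitDensity ρ s)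
    (hcos : ∀ s ∈ Ioo 0 ρ, Real.cos (f s) = Real.cos (slitAngle ρ s)) (h : ℂ → ENNReal) :
    ∫⁻ t in f '' Ioo 0 ρ, h (slitMap ρ (circleMap 0 1 t)) =
      ∫⁻ s in Ioo 0 ρ, ENNReal.ofReal (slitDensity ρ s) * h s := by
  rw [lintegral_image_eq_lintegral_abs_deriv_mul measurableSet_Ioo
    (fun s hs ↦ (hf s hs).hasDerivWithinAt) (injOn_of_cos_eq_cos_slitAngle hρ hcos)]
  refine setLIntegral_congr_fun measurableSet_Ioo fun s hs ↦ ?_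
  simp only [hf' s hs, slitMap_circleMap_of_cos_eq hρ hs (hcos s hs)]

lemma setLIntegral_neg_log_norm_slitMap_le (hρ : ρ ∈ Ioo 0 1) {G : ℂ → ℂ}
    (hG : DifferentiableOn ℂ G {s | 0 < s.re}) (hG_le : ∀ s, 0 < s.re → ‖G s‖ ≤ 1)
    (hG_one : G 1 ≠ 0) {S : Set ℝ} (hSm : MeasurableSet S) (hS : S ⊆ Ioc 0 (2 * π))
    (hslit : ∀ t ∈ S, ∃ s ∈ Ioo 0 ρ, Real.cos t = Real.cos (slitAngle ρ s)) :
    ∫⁻ t in S, ENNReal.ofReal (-Real.log ‖G (slitMap ρ (circleMap 0 1 t))‖) ≤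
      ENNReal.ofReal (2 * π * -Real.log ‖G 1‖) := by
  have hsq {z : ℂ} (hz : z ∈ ball 0 1) : slitMapSq ρ z ∈ slitPlane :=
    slitMapSq_mem_slitPlane (pow_le_one₀ hρ.1.le hρ.2.le) (mem_ball_zero_iff.mp hz)
  have hmaps : MapsTo (slitMap ρ) (ball 0 1) {s | 0 < s.re} := fun z hz ↦ re_sqrt_pos (hsq hz)
  have hdiff : DifferentiableOn ℂ (slitMap ρ) (ball 0 1) := fun z hz ↦
    (differentiableAt_slitMap (slitPlane_ne_zero (mem_slitPlane_of_norm_lt_one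
      (mem_ball_zero_iff.mp hz))) (hsq hz)).differentiableWithinAt
  rw [← slitMap_zero ρ] at hG_one ⊢
  refine setLIntegral_neg_log_norm_circleMap_le one_pos (hG.comp hdiff hmaps) hG_one
    (fun z hz ↦ hG_le _ (hmaps hz)) hSm hS fun t ht ↦ ContinuousAt.continuousWithinAt ?_
  obtain ⟨s, hs, hcos⟩ := hslit t ht
  refine ContinuousAt.comp ?_ (continuousAt_slitMap_circleMap_of_cos_eq hρ.2 hs hcos)
  rw [slitMap_circleMap_of_cos_eq hρ.2 hs hcos]
  exact (hG.differentiableAt ((isOpen_lt continuous_const continuous_re).mem_nhds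
    (by simpa using hs.1))).continuousAt

lemma lintegral_slitDensity_mul_neg_log_norm_le (hρ : ρ ∈ Ioo 0 1) {G : ℂ → ℂ}
    (hG : DifferentiableOn ℂ G {s | 0 < s.re}) (hG_le : ∀ s, 0 < s.re → ‖G s‖ ≤ 1)
    (hG_one : G 1 ≠ 0) :
    ∫⁻ s in Ioo 0 ρ, ENNReal.ofReal (slitDensity ρ s) * ENNReal.ofReal (-Real.log ‖G s‖) ≤
      ENNReal.ofReal (π * -Real.log ‖G 1‖) := by
  let φ := slitAngle ρ
  let φ' := fun s ↦ 2 * π - slitAngle ρ s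
  have hφ : MapsTo φ (Ioo 0 ρ) (Ioo 0 π) := fun s hs ↦ slitAngle_mem_Ioo hρ.2 hs
  have hφ' : MapsTo φ' (Ioo 0 ρ) (Ioo π (2 * π)) := fun s hs ↦
    ⟨by linarith [(hφ hs).2], by linarith [(hφ hs).1]⟩
  have hcos (s) (_ : s ∈ Ioo 0 ρ) : Real.cos (φ' s) = Real.cos (slitAngle ρ s) :=
    Real.cos_two_pi_sub _
  have hderiv (s) (hs : s ∈ Ioo 0 ρ) : HasDerivAt φ (-slitDensity ρ s) s :=
    hasDerivAt_slitAngle hρ.2 hs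
  have hderiv' (s) (hs : s ∈ Ioo 0 ρ) : HasDerivAt φ' (slitDensity ρ s) s :=
    ((hderiv s hs).const_sub _).congr_deriv (neg_neg _)
  have hdensity (s) (hs : s ∈ Ioo 0 ρ) := abs_of_nonneg (slitDensity_nonneg hρ.2 hs)
  have hmeas := measurableSet_image_of_cos_eq_cos_slitAngle hρ.2 (HasDerivAt.continuousOn hderiv)
    fun _ _ ↦ rfl
  have hmeas' := measurableSet_image_of_cos_eq_cos_slitAngle hρ.2 (HasDerivAt.continuousOn hderiv')
    hcos
  have hdisj : Disjoint (φ '' Ioo 0 ρ) (φ' '' Ioo 0 ρ) :=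
    (Ioo_disjoint_Ioo.mpr ((min_le_left _ _).trans (le_max_right _ _))).mono
      hφ.image_subset hφ'.image_subset
  have hJensen := setLIntegral_neg_log_norm_slitMap_le hρ hG hG_le hG_one (hmeas.union hmeas')
    (union_subset
      (hφ.image_subset.trans fun t ht ↦ ⟨ht.1, by linarith [ht.2, pi_pos]⟩)
      (hφ'.image_subset.trans fun t ht ↦ ⟨pi_pos.trans ht.1, ht.2.le⟩))
    (by rintro _ (⟨s, hs, rfl⟩ | ⟨s, hs, rfl⟩); exacts [⟨s, hs, rfl⟩, ⟨s, hs, hcos s hs⟩])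
  rw [lintegral_union hmeas' hdisj,
    setLIntegral_image_slitMap_circleMap hρ.2 hderiv
      (fun s hs ↦ (abs_neg _).trans (hdensity s hs)) (fun _ _ ↦ rfl)
      (fun w ↦ ENNReal.ofReal (-Real.log ‖G w‖)),
    setLIntegral_image_slitMap_circleMap hρ.2 hderiv' hdensity hcos
      (fun w ↦ ENNReal.ofReal (-Real.log ‖G w‖)),
    ← two_mul, mul_assoc, ENNReal.ofReal_mul zero_le_two, ENNReal.ofReal_ofNat] at hJensen
  exact (ENNReal.mul_le_mul_iff_right two_ne_zero ENNReal.ofNat_ne_top).mp hJensen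

lemma two_thirds_le_slitDensity (hρ : ρ < 1) (hs : s ∈ Ioo 0 ρ)
    (hsρ : ρ ^ 2 - s ^ 2 ≤ 9 * (1 - ρ ^ 2) * s ^ 2) : 2 / 3 ≤ slitDensity ρ s := by
  obtain ⟨hs0, hs⟩ := hs
  have hd : 0 < 1 - s ^ 2 := by nlinarith
  have hpos : 0 < ρ ^ 2 - s ^ 2 := by nlinarith
  have hsqrt : √(ρ ^ 2 - s ^ 2) ≤ 3 * s * √(1 - ρ ^ 2) := by
    refine Real.sqrt_le_iff.mpr ⟨by positivity, ?_⟩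
    rw [mul_pow, Real.sq_sqrt (by nlinarith)]
    linarith
  rw [slitDensity, div_le_div_iff₀ three_pos (by positivity)]
  have : (1 - s ^ 2) * √(ρ ^ 2 - s ^ 2) ≤ √(ρ ^ 2 - s ^ 2) :=
    mul_le_of_le_one_left (Real.sqrt_nonneg _) (by nlinarith)
  linarith

end SlitMap

section HorodiscMap

/-- The Möbius involution that exchanges the right half-plane and the disc with diameter
`(-1/2, 1)`, with `0 ↦ 1` and `1 ↦ 0`. It is stated over any field for use on both `ℝ` and `ℂ`. -/
def horodiscMap {𝕜 : Type*} [Field 𝕜] (x : 𝕜) : 𝕜 := (1 - x) / (1 + 2 * x)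

lemma one_sub_horodiscMap {𝕜 : Type*} [Field 𝕜] {x : 𝕜} (hx : 1 + 2 * x ≠ 0) :
    1 - horodiscMap x = 3 * x / (1 + 2 * x) := by
  rw [horodiscMap, one_sub_div hx]
  ring

lemma horodiscMap_horodiscMap {𝕜 : Type*} [Field 𝕜] [CharZero 𝕜] {x : 𝕜} (hx : 1 + 2 * x ≠ 0) :
    horodiscMap (horodiscMap x) = x := by
  have hden : 1 + 2 * horodiscMap x = 3 / (1 + 2 * x) := by
    rw [horodiscMap]
    field_simp
    ring
  rw [horodiscMap, one_sub_horodiscMap hx, hden, div_div_div_cancel_right₀ hx]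
  field_simp

lemma ofReal_horodiscMap (x : ℝ) : (↑(horodiscMap x) : ℂ) = horodiscMap (x : ℂ) := by
  simp [horodiscMap]

lemma strictAntiOn_horodiscMap : StrictAntiOn (horodiscMap : ℝ → ℝ) (Ioi (-1 / 2)) := by
  intro x hx y hy hxy
  rw [mem_Ioi] at hx hy
  rw [horodiscMap, horodiscMap, div_lt_div_iff₀ (by linarith) (by linarith)]
  linarith

lemma hasDerivAt_horodiscMap {𝕜 : Type*} [NontriviallyNormedField 𝕜] {x : 𝕜}
    (hx : 1 + 2 * x ≠ 0) : HasDerivAt horodiscMap (-3 / (1 + 2 * x) ^ 2) x := by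
  refine (((hasDerivAt_id x).const_sub 1).div
    (((hasDerivAt_id x).const_mul 2).const_add 1) hx).congr_deriv ?_
  simp only [id]
  ring

lemma one_add_two_mul_ne_zero_of_re_pos {s : ℂ} (hs : 0 < s.re) : 1 + 2 * s ≠ 0 := by
  refine slitPlane_ne_zero (Or.inl ?_)
  simp only [add_re, one_re, mul_re, re_ofNat, im_ofNat]
  linarith

lemma sq_norm_one_add_two_mul (s : ℂ) :
    ‖1 + 2 * s‖ ^ 2 = ‖1 - s‖ ^ 2 + 3 * (2 * s.re + ‖s‖ ^ 2) := by
  simp only [Complex.sq_norm, normSq_apply, add_re, add_im, sub_re, sub_im, mul_re, mul_im, one_re,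
    one_im, re_ofNat, im_ofNat]
  ring

lemma norm_horodiscMap_lt_one {s : ℂ} (hs : 0 < s.re) : ‖horodiscMap s‖ < 1 := by
  rw [horodiscMap, norm_div, div_lt_one (norm_pos_iff.mpr (one_add_two_mul_ne_zero_of_re_pos hs))]
  refine lt_of_pow_lt_pow_left₀ 2 (norm_nonneg _) ?_
  rw [sq_norm_one_add_two_mul]
  linarith [sq_nonneg ‖s‖]

lemma sq_norm_one_sub_horodiscMap_le {s : ℂ} (hs : 0 < s.re) :
    ‖1 - horodiscMap s‖ ^ 2 ≤ 6 * (1 - ‖horodiscMap s‖) := by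
  have hne := one_add_two_mul_ne_zero_of_re_pos hs
  have hw : ‖1 - s‖ = ‖horodiscMap s‖ * ‖1 + 2 * s‖ := by
    rw [← norm_mul, horodiscMap, div_mul_cancel₀ _ hne]
  have hsq := sq_norm_one_add_two_mul s
  rw [one_sub_horodiscMap hne, norm_div, norm_mul, div_pow,
    div_le_iff₀ (pow_pos (norm_pos_iff.mpr hne) 2), mul_pow, Complex.norm_ofNat]
  rw [hw] at hsq
  nlinarith [mul_nonneg (sq_nonneg (1 - ‖horodiscMap s‖)) (sq_nonneg ‖1 + 2 * s‖)]

lemma Ioo_subset_image_horodiscMap {x y : ℝ} (hx : 0 ≤ x) :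
    Ioo x y ⊆ horodiscMap '' Ioo (horodiscMap y) (horodiscMap x) := fun z hz ↦ by
  have hmem {t : ℝ} (ht : 0 ≤ t) : t ∈ Ioi (-1 / 2 : ℝ) := by rw [mem_Ioi]; linarith
  have hz0 : 0 ≤ z := hx.trans hz.1.le
  exact ⟨horodiscMap z, ⟨strictAntiOn_horodiscMap (hmem hz0) (hmem (hz0.trans hz.2.le)) hz.2,
    strictAntiOn_horodiscMap (hmem hx) (hmem hz0) hz.1⟩, horodiscMap_horodiscMap (by positivity)⟩

lemma abs_deriv_horodiscMap_le_slitDensity {σ ρ s : ℝ} (hσ : 0 < σ) (hρ : ρ < 1)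
    (hσρ : ρ ^ 2 - σ ^ 2 ≤ 9 * (1 - ρ ^ 2) * σ ^ 2) (hs : s ∈ Ioo σ ρ) :
    |-3 / (1 + 2 * s) ^ 2| ≤ 9 / 2 * slitDensity ρ s := by
  have hs0 : 0 < s := hσ.trans hs.1
  have hρ_sq : 0 ≤ 1 - ρ ^ 2 := by nlinarith [hs.2]
  have hσs : σ ^ 2 ≤ s ^ 2 := pow_le_pow_left₀ hσ.le hs.1.le 2
  have hdensity := two_thirds_le_slitDensity hρ ⟨hs0, hs.2⟩
    (by nlinarith [mul_le_mul_of_nonneg_left hσs hρ_sq])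
  calc |-3 / (1 + 2 * s) ^ 2| = 3 / (1 + 2 * s) ^ 2 := by
        rw [abs_div, abs_neg, Nat.abs_ofNat, abs_of_nonneg (sq_nonneg _)]
    _ ≤ 3 := div_le_self zero_le_three (one_le_pow₀ (by linarith))
    _ ≤ 9 / 2 * slitDensity ρ s := by linarith

lemma setLIntegral_image_horodiscMap_neg_log_norm_le {σ ρ : ℝ} (hσ : 0 < σ) (hρ : ρ ∈ Ioo 0 1)
    (hσρ : ρ ^ 2 - σ ^ 2 ≤ 9 * (1 - ρ ^ 2) * σ ^ 2) {G : ℂ → ℂ}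
    (hG : DifferentiableOn ℂ G {s | 0 < s.re}) (hG_le : ∀ s, 0 < s.re → ‖G s‖ ≤ 1)
    (hG_one : G 1 ≠ 0) :
    ∫⁻ x in horodiscMap '' Ioo σ ρ, ENNReal.ofReal (-Real.log ‖G ↑(horodiscMap x)‖) ≤
      ENNReal.ofReal (9 / 2 * (π * -Real.log ‖G 1‖)) := by
  have hne {s : ℝ} (hs : s ∈ Ioo σ ρ) : 1 + 2 * s ≠ 0 := by linarith [hs.1]
  have hinv {s : ℝ} (hs : s ∈ Ioo σ ρ) : horodiscMap (horodiscMap s) = s :=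
    horodiscMap_horodiscMap (hne hs)
  calc ∫⁻ x in horodiscMap '' Ioo σ ρ, ENNReal.ofReal (-Real.log ‖G ↑(horodiscMap x)‖)
    _ = ∫⁻ s in Ioo σ ρ, ENNReal.ofReal |-3 / (1 + 2 * s) ^ 2| *
          ENNReal.ofReal (-Real.log ‖G ↑(horodiscMap (horodiscMap s))‖) :=
        lintegral_image_eq_lintegral_abs_deriv_mul measurableSet_Ioo
          (fun s hs ↦ (hasDerivAt_horodiscMap (hne hs)).hasDerivWithinAt)
          (LeftInvOn.injOn fun s hs ↦ hinv hs) _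
    _ ≤ ∫⁻ s in Ioo σ ρ, ENNReal.ofReal (9 / 2) *
          (ENNReal.ofReal (slitDensity ρ s) * ENNReal.ofReal (-Real.log ‖G s‖)) := by
        refine setLIntegral_mono' measurableSet_Ioo fun s hs ↦ ?_
        rw [hinv hs, ← mul_assoc, ← ENNReal.ofReal_mul (p := 9 / 2) (by norm_num)]
        gcongr
        exact abs_deriv_horodiscMap_le_slitDensity hσ hρ.2 hσρ hs
    _ = ENNReal.ofReal (9 / 2) * ∫⁻ s in Ioo σ ρ,
          ENNReal.ofReal (slitDensity ρ s) * ENNReal.ofReal (-Real.log ‖G s‖) :=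
        lintegral_const_mul' _ _ ENNReal.ofReal_ne_top
    _ ≤ ENNReal.ofReal (9 / 2) * ENNReal.ofReal (π * -Real.log ‖G 1‖) := by
        gcongr
        exact (lintegral_mono_set (Ioo_subset_Ioo_left hσ.le)).trans
          (lintegral_slitDensity_mul_neg_log_norm_le hρ hG hG_le hG_one)
    _ = ENNReal.ofReal (9 / 2 * (π * -Real.log ‖G 1‖)) :=
        (ENNReal.ofReal_mul (by norm_num)).symm

lemma setLIntegral_neg_log_norm_comp_horodiscMap_le {a : ℝ} (ha : a ∈ Ioc 0 (1 / 3)) {G : ℂ → ℂ}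
    (hG : DifferentiableOn ℂ G {s | 0 < s.re}) (hG_le : ∀ s, 0 < s.re → ‖G s‖ ≤ 1)
    (hG_one : G 1 ≠ 0) :
    ∫⁻ x in Ioo (1 - 2 * a) (1 - a), ENNReal.ofReal (-Real.log ‖G ↑(horodiscMap x)‖) ≤
      ENNReal.ofReal (9 / 2 * (π * -Real.log ‖G 1‖)) := by
  obtain ⟨ha0, ha3⟩ := ha
  set σ := horodiscMap (1 - a) with hσ_def
  set ρ := horodiscMap (1 - 2 * a) with hρ_def
  have hσ : σ = a / (3 - 2 * a) := by rw [hσ_def, horodiscMap]; ring_nf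
  have hρ : ρ = 2 * a / (3 - 4 * a) := by rw [hρ_def, horodiscMap]; ring_nf
  have hσ0 : 0 < σ := hσ ▸ div_pos ha0 (by linarith)
  have hρ0 : 0 < ρ := hρ ▸ div_pos (by linarith) (by linarith)
  have hρ_le : ρ ≤ 2 / 5 := by
    rw [hρ, div_le_div_iff₀ (by linarith) (by norm_num)]
    linarith
  have hρσ : ρ ≤ 14 / 5 * σ := by
    rw [hρ, hσ, div_mul_div_comm, div_le_div_iff₀ (by linarith) (by linarith)]
    nlinarith
  have hρ_sq : ρ ^ 2 ≤ (2 / 5) ^ 2 := pow_le_pow_left₀ hρ0.le hρ_le 2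
  have hρσ_sq : ρ ^ 2 ≤ (14 / 5 * σ) ^ 2 := pow_le_pow_left₀ hρ0.le hρσ 2
  exact (lintegral_mono_set (Ioo_subset_image_horodiscMap (by linarith))).trans <|
    setLIntegral_image_horodiscMap_neg_log_norm_le hσ0 ⟨hρ0, by linarith⟩
      (by nlinarith [mul_le_mul_of_nonneg_right hρ_sq (sq_nonneg σ)]) hG hG_le hG_one

end HorodiscMap

lemma neg_log_norm_le_of_norm_le {u w : ℂ} (h : ‖w‖ ≤ ‖u‖) (hw : w = 0 → u = 0) :
    -Real.log ‖u‖ ≤ -Real.log ‖w‖ := by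
  rcases eq_or_ne w 0 with h0 | h0
  · simp [h0, hw h0]
  · exact neg_le_neg (Real.log_le_log (norm_pos_iff.mpr h0) h)

lemma setLIntegral_neg_log_norm_le {a : ℝ} (ha : a ∈ Ioc 0 (1 / 3)) {Q : ℂ → ℂ}
    (hQ : DifferentiableOn ℂ Q (ball 0 1)) (hQ_zero : Q 0 ≠ 0)
    (hQ_le : ∀ w ∈ ball 0 1, ‖Q w‖ * (6 * (1 - ‖w‖)) ≤ 1) :
    ∫⁻ x : ℝ in Ioo (1 - 2 * a) (1 - a), ENNReal.ofReal (-Real.log ‖Q x‖) ≤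
      ENNReal.ofReal (9 / 2 * (π * -Real.log ‖Q 0‖)) := by
  let G : ℂ → ℂ := fun s ↦ Q (horodiscMap s) * (1 - horodiscMap s) ^ 2
  have hmaps : MapsTo horodiscMap {s : ℂ | 0 < s.re} (ball 0 1) := fun s hs ↦
    mem_ball_zero_iff.mpr (norm_horodiscMap_lt_one hs)
  have hdiff : DifferentiableOn ℂ horodiscMap {s : ℂ | 0 < s.re} := fun s hs ↦
    (hasDerivAt_horodiscMap
      (one_add_two_mul_ne_zero_of_re_pos hs)).differentiableAt.differentiableWithinAt
  have hG : DifferentiableOn ℂ G {s | 0 < s.re} :=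
    (hQ.comp hdiff hmaps).mul ((hdiff.const_sub 1).pow 2)
  have hG_le (s : ℂ) (hs : 0 < s.re) : ‖G s‖ ≤ 1 := by
    rw [norm_mul, norm_pow]
    exact (mul_le_mul_of_nonneg_left (sq_norm_one_sub_horodiscMap_le hs) (norm_nonneg _)).trans
      (hQ_le _ (hmaps hs))
  have hG_one : G 1 = Q 0 := by simp [G, horodiscMap]
  have hG_real {x : ℝ} (hx : x ∈ Ioo (1 - 2 * a) (1 - a)) :
      -Real.log ‖Q x‖ ≤ -Real.log ‖G ↑(horodiscMap x)‖ := by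
    have hx0 : 0 < x := by linarith [hx.1, ha.2]
    have hx1 : 0 < 1 - x := by linarith [hx.2, ha.1]
    have hGx : G ↑(horodiscMap x) = Q x * ((1 - x) ^ 2 : ℝ) := by
      simp [G, ← ofReal_horodiscMap, horodiscMap_horodiscMap (by positivity : 1 + 2 * x ≠ 0)]
    rw [hGx]
    apply neg_log_norm_le_of_norm_le
    · rw [norm_mul, norm_real, Real.norm_of_nonneg (by positivity)]
      exact mul_le_of_le_one_right (norm_nonneg _) (pow_le_one₀ hx1.le (by linarith))
    · exact fun h ↦ (mul_eq_zero.mp h).resolve_right (ofReal_ne_zero.mpr (by positivity))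
  have hbound := setLIntegral_neg_log_norm_comp_horodiscMap_le ha hG hG_le (hG_one ▸ hQ_zero)
  rw [hG_one] at hbound
  exact (setLIntegral_mono' measurableSet_Ioo fun x hx ↦
    ENNReal.ofReal_le_ofReal (hG_real hx)).trans hbound

lemma setLIntegral_neg_log_norm_le_log_six_mul {a M : ℝ} (ha : a ∈ Ioc 0 (1 / 3)) {P : ℂ → ℂ}
    (hP : DifferentiableOn ℂ P (ball 0 1)) (hP_zero : 1 ≤ ‖P 0‖)
    (hP_le : ∀ w ∈ ball 0 1, ‖P w‖ * (1 - ‖w‖) ≤ M) :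
    ∫⁻ x : ℝ in Ioo (1 - 2 * a) (1 - a), ENNReal.ofReal (-Real.log ‖P x‖) ≤
      ENNReal.ofReal (9 / 2 * (π * Real.log (6 * M))) := by
  have hM : 1 ≤ M := hP_zero.trans (by simpa using hP_le 0 (mem_ball_self one_pos))
  have hP0 : P 0 ≠ 0 := norm_pos_iff.mp (by linarith)
  have hM0 : ((6 * M : ℝ) : ℂ) ≠ 0 := ofReal_ne_zero.mpr (by positivity)
  have hnorm (w : ℂ) : ‖P w / ↑(6 * M)‖ = ‖P w‖ / (6 * M) := by
    rw [norm_div, norm_real, Real.norm_of_nonneg (by positivity)]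
  have hQ_le (w : ℂ) (hw : w ∈ ball 0 1) : ‖P w / ↑(6 * M)‖ * (6 * (1 - ‖w‖)) ≤ 1 := by
    rw [hnorm, div_mul_eq_mul_div, div_le_one (by positivity)]
    linarith [hP_le w hw]
  have hlog : -Real.log ‖P 0 / ↑(6 * M)‖ ≤ Real.log (6 * M) := by
    rw [hnorm, Real.log_div (norm_ne_zero_iff.mpr hP0) (by positivity)]
    linarith [Real.log_nonneg hP_zero]
  calc ∫⁻ x : ℝ in Ioo (1 - 2 * a) (1 - a), ENNReal.ofReal (-Real.log ‖P x‖)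
    _ ≤ ∫⁻ x : ℝ in Ioo (1 - 2 * a) (1 - a), ENNReal.ofReal (-Real.log ‖P x / ↑(6 * M)‖) := by
        refine lintegral_mono fun x ↦ ENNReal.ofReal_le_ofReal (neg_log_norm_le_of_norm_le ?_ ?_)
        · rw [hnorm]
          exact div_le_self (norm_nonneg _) (by linarith)
        · exact fun h ↦ (div_eq_zero_iff.mp h).resolve_right hM0
    _ ≤ ENNReal.ofReal (9 / 2 * (π * -Real.log ‖P 0 / ↑(6 * M)‖)) :=
        setLIntegral_neg_log_norm_le ha (hP.div_const _) (div_ne_zero hP0 hM0) hQ_le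
    _ ≤ ENNReal.ofReal (9 / 2 * (π * Real.log (6 * M))) := by gcongr

lemma nine_halves_mul_log_six_mul_le {M : ℝ} (hM : 1 ≤ M) :
    9 / 2 * (π * Real.log (6 * M)) ≤ 9 * π / √2 * Real.log (4 * M) := by
  have hpow : (6 * M) ^ 5 ≤ (4 * M) ^ 7 := by
    have : M ^ 5 ≤ M ^ 7 := pow_le_pow_right₀ hM (by norm_num)
    rw [mul_pow, mul_pow]
    linarith [pow_pos (one_pos.trans_le hM) 5]
  have hlog : 5 * Real.log (6 * M) ≤ 7 * Real.log (4 * M) := by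
    have := Real.log_le_log (by positivity) hpow
    rwa [Real.log_pow, Real.log_pow] at this
  have hsqrt : 7 / 5 ≤ √2 := Real.le_sqrt_of_sq_le (by norm_num)
  have hlog4 : 0 ≤ Real.log (4 * M) := Real.log_nonneg (by linarith)
  calc 9 / 2 * (π * Real.log (6 * M)) ≤ 9 / 2 * (π * (√2 * Real.log (4 * M))) := by
        gcongr
        linarith [mul_le_mul_of_nonneg_right hsqrt hlog4]
    _ = 9 * π / √2 * Real.log (4 * M) := by
        field_simp
        rw [Real.sq_sqrt zero_le_two]

theorem log_minus_integral_le_general {a M : ℝ} (ha : a ∈ Ioc 0 (1 / 3)) {P : ℂ → ℂ}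
    (hP : DifferentiableOn ℂ P (ball 0 1)) (hP_zero : 1 ≤ ‖P 0‖)
    (hP_le : ∀ w ∈ ball 0 1, ‖P w‖ * (1 - ‖w‖) ≤ M) :
    ∫ x : ℝ in (1 - 2 * a)..(1 - a), max 0 (-Real.log ‖P x‖) ≤
      9 * π / √2 * Real.log (4 * M) := by
  have hM : 1 ≤ M := hP_zero.trans (by simpa using hP_le 0 (mem_ball_self one_pos))
  refine le_trans ?_ (nine_halves_mul_log_six_mul_le hM)
  have hlog6 : 0 ≤ Real.log (6 * M) := Real.log_nonneg (by linarith)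
  rw [intervalIntegral.integral_of_le (by linarith [ha.1]), integral_Ioc_eq_integral_Ioo]
  refine (Real.le_norm_self _).trans ((norm_integral_le_lintegral_norm _).trans
    (ENNReal.toReal_le_of_le_ofReal (by positivity) ?_))
  simpa [abs_of_nonneg, ENNReal.ofReal_max] using
    setLIntegral_neg_log_norm_le_log_six_mul ha hP hP_zero hP_le

lemma norm_sum_mul_pow_mul_one_sub_norm_le {n : ℕ} {M : ℝ} (hM : 0 ≤ M) {c : Fin n → ℂ}
    (hc : ∀ j, ‖c j‖ ≤ M) {w : ℂ} (hw : ‖w‖ ≤ 1) : ‖∑ j, c j * w ^ (j : ℕ)‖ * (1 - ‖w‖) ≤ M := by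
  have hsum : ‖∑ j, c j * w ^ (j : ℕ)‖ ≤ M * ∑ j ∈ Finset.range n, ‖w‖ ^ j := by
    rw [Finset.mul_sum, ← Fin.sum_univ_eq_sum_range (fun j ↦ M * ‖w‖ ^ j)]
    refine norm_sum_le_of_le _ fun j _ ↦ ?_
    rw [norm_mul, norm_pow]
    exact mul_le_mul_of_nonneg_right (hc j) (by positivity)
  calc ‖∑ j, c j * w ^ (j : ℕ)‖ * (1 - ‖w‖)
    _ ≤ M * (∑ j ∈ Finset.range n, ‖w‖ ^ j) * (1 - ‖w‖) :=
        mul_le_mul_of_nonneg_right hsum (sub_nonneg.mpr hw)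
    _ = M * (1 - ‖w‖ ^ n) := by rw [mul_assoc, geom_sum_mul_neg]
    _ ≤ M := mul_le_of_le_one_right hM (sub_le_self _ (by positivity))

lemma integral_log_minus_abs_sum_le {a M : ℝ} (ha : a ∈ Ioc 0 (1 / 3)) {n : ℕ}
    {c : Fin (n + 1) → ℝ} (hc_zero : 1 ≤ |c 0|) (hc : ∀ j, |c j| ≤ M) :
    ∫ x in (1 - 2 * a)..(1 - a), max 0 (-Real.log |∑ j, c j * x ^ (j : ℕ)|) ≤
      9 * π / √2 * Real.log (4 * M) := by
  have hnorm (j) : ‖(c j : ℂ)‖ ≤ M := (norm_real (c j)).trans_le (hc j)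
  have hgeneral := log_minus_integral_le_general ha (P := fun z ↦ ∑ j, (c j : ℂ) * z ^ (j : ℕ))
    (by fun_prop) (by simpa [Fin.sum_univ_succ] using hc_zero)
    fun w hw ↦ norm_sum_mul_pow_mul_one_sub_norm_le ((abs_nonneg _).trans (hc 0)) hnorm
      (mem_ball_zero_iff.mp hw).le
  simpa only [← ofReal_pow, ← ofReal_mul, ← ofReal_sum, norm_real, Real.norm_eq_abs] using hgeneral

/-- Jacob–Nazarov lemma: `∫_{I_a} log⁻ |P(x)| dx ≤ (9π/√2) log (4M)` for
`P(x) = ∑_{j=0}^n b_j a_j x^j` with `a_j ∈ [1,M]`, `b_j ∈ {-1,0,1}`, `b_0 ∈ {-1,1}`. -/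
theorem log_minus_integral_le (a : ℝ) (ha : a ∈ Set.Ioc (0 : ℝ) (1 / 3))
    (n : ℕ) (M : ℝ) (hM : 1 ≤ M)
    (A b : Fin (n + 1) → ℝ)
    (hA : ∀ j, A j ∈ Set.Icc (1 : ℝ) M)
    (hb : ∀ j, b j = -1 ∨ b j = 0 ∨ b j = 1)
    (hb0 : b 0 = -1 ∨ b 0 = 1) :
    ∫ x in (1 - 2 * a)..(1 - a),
        max 0 (-(Real.log |∑ j : Fin (n + 1), b j * A j * x ^ (j : ℕ)|)) ≤
      (9 * Real.pi / Real.sqrt 2) * Real.log (4 * M) := by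
  refine integral_log_minus_abs_sum_le ha (c := fun j ↦ b j * A j) ?_ fun j ↦ ?_
  · rw [abs_mul, (abs_eq zero_le_one).mpr hb0.symm, one_mul]
    exact (hA 0).1.trans (le_abs_self _)
  · have hb_abs : |b j| ≤ 1 := by rcases hb j with h | h | h <;> simp [h]
    rw [abs_mul, abs_of_nonneg (zero_le_one.trans (hA j).1)]
    exact (mul_le_of_le_one_left (zero_le_one.trans (hA j).1) hb_abs).trans (hA j).2
end
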